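/- arXiv:1802.09490 — 4 statements merged into one kernel-verified Lean document; each statement's English description precedes it below -/
import Mathlib

section
/- Let Γ_1 and Γ_2 be two Fragile CPR games with identical players and resource characteristics, at tax rates t_1 and t_2 respectively, with t_1 > t_2 and both less than t̄. Then y^{t_1}_i ≤ y^{t_2}_i for every player i (with α_i ∈ (0,1] and k_i > 0). Moreover, if in addition the PNE utilizations satisfy x^{t_1}_NE > x^{t_2}_NE, then Supp(Γ_1) ⊆ Supp(Γ_2). -/
/-!
On `S_t ∩ [0, 1)` the effective rate of return is the positive factor `1 - p` times
`(r - t) ^ α - k (1 + t) ^ α p / (1 - p)`, which is concave: `u ↦ u ^ α` is concave and increasing,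
and `u ↦ u / (1 - u)` is convex and increasing. So once the effective rate has been positive and
vanishes at `y`, it is negative beyond `y`. Since it is also antitone in the tax rate, its zero
`y₁` at the higher tax rate is a point where the rate at the lower tax rate is nonnegative, and
`y₁` cannot lie beyond the zero `y₂` of the latter.
-/

open Real Set

noncomputable section

/-- Effective rate of return of a player with sensitivity `α` and loss aversion `k`,
at utilization `x` and tax rate `t`. -/
def effRate (p r : ℝ → ℝ) (α k x t : ℝ) : ℝ :=
  if 0 ≤ r x - t then
    (r x - t) ^ α * (1 - p x) - k * (1 + t) ^ α * p x
  else
    -(k * ((t - r x) ^ α * (1 - p x) + (1 + t) ^ α * p x))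

/-- Partial derivative of the effective rate of return in the utilization. -/
def effRateDx (p r : ℝ → ℝ) (α k x t : ℝ) : ℝ :=
  deriv (fun z => effRate p r α k z t) x

/-- `g_i(x,t) = α_i f_i(x,t) / (−f_{i,x}(x,t))`. -/
def gFun (p r : ℝ → ℝ) (α k x t : ℝ) : ℝ :=
  α * effRate p r α k x t / (-effRateDx p r α k x t)

/-- Standing assumptions on the failure probability `p`. -/
structure FailureProb (p : ℝ → ℝ) : Prop where
  convexOn : ConvexOn ℝ (Ico (0:ℝ) 1) p
  strictMonoOn : StrictMonoOn p (Ico (0:ℝ) 1)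
  contDiffOn : ContDiffOn ℝ 1 p (Ico (0:ℝ) 1)
  eq_one : ∀ x : ℝ, 1 ≤ x → p x = 1
  mem_unit : ∀ x : ℝ, p x ∈ Icc (0:ℝ) 1

/-- Standing assumptions on the rate of return `r`. -/
structure RateOfReturn (r : ℝ → ℝ) : Prop where
  concaveOn : ConcaveOn ℝ (Icc (0:ℝ) 1) r
  pos : ∀ x ∈ Icc (0:ℝ) 1, 0 < r x
  strictMonoOrAnti : StrictMonoOn r (Icc (0:ℝ) 1) ∨ StrictAntiOn r (Icc (0:ℝ) 1)
  contDiffOn : ContDiffOn ℝ 1 r (Icc (0:ℝ) 1)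

/-- `S_t`: the set of utilizations `x ∈ [0,1]` with `r(x) − t ≥ 0`. -/
def St (r : ℝ → ℝ) (t : ℝ) : Set ℝ := {x | x ∈ Icc (0:ℝ) 1 ∧ 0 ≤ r x - t}

/-- The maximal tax rate `t̄` of the game. -/
def tbar {ι : Type*} [Fintype ι] (p r : ℝ → ℝ) (α k : ι → ℝ) : ℝ :=
  sSup {t : ℝ | 0 ≤ t ∧ ∃ i : ι, ∃ x ∈ Icc (0:ℝ) 1, 0 < effRate p r (α i) (k i) x t}

/-- The maximal tax rate `t̄_i` of a single player. -/
def tbarI (p r : ℝ → ℝ) (α k : ℝ) : ℝ :=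
  sSup {t : ℝ | 0 ≤ t ∧ ∃ x ∈ St r t, 0 < effRate p r α k x t}

/-- `a_t` for a strictly increasing rate of return. -/
def aT (r : ℝ → ℝ) (t : ℝ) : ℝ :=
  if t ≤ r 0 then 0 else sInf {x | x ∈ Icc (0:ℝ) 1 ∧ r x = t}

/-- The threshold `y^t_i` for a strictly decreasing rate of return. -/
def yT (p r : ℝ → ℝ) (α k t : ℝ) : ℝ :=
  if effRate p r α k 0 t ≤ 0 then 0
  else sInf {x | x ∈ St r t ∧ effRate p r α k x t = 0}

/-- `ĝ_i(x,t)`, for a strictly decreasing rate of return. -/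
def gHat (p r : ℝ → ℝ) (α k x t : ℝ) : ℝ :=
  if x < yT p r α k t then gFun p r α k x t else 0

/-- The function `q_i(x,t)` for strictly increasing rate of return. -/
def qFun (p r : ℝ → ℝ) (α x t : ℝ) : ℝ :=
  deriv r x * (1 - p x) ^ 2 /
      ((r x + 1) * deriv p x - α * deriv r x * (1 - p x) * p x) *
    ((1 + t) / (r x - t)) ^ (1 - α)

/-- `b` is a best response of a player (parameters `α`, `k`) to the others' total
investment `xbar` at tax rate `t`. -/
def IsBestResponse (p r : ℝ → ℝ) (α k t xbar b : ℝ) : Prop :=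
  b ∈ Icc (0:ℝ) 1 ∧
    ∀ y ∈ Icc (0:ℝ) 1,
      y ^ α * effRate p r α k (y + xbar) t ≤ b ^ α * effRate p r α k (b + xbar) t

/-- Pure Nash equilibrium of the Fragile CPR game at tax rate `t`. -/
def IsPNE {ι : Type*} [Fintype ι] [DecidableEq ι] (p r : ℝ → ℝ) (α k : ι → ℝ)
    (t : ℝ) (x : ι → ℝ) : Prop :=
  (∀ i, x i ∈ Icc (0:ℝ) 1) ∧
    ∀ i, ∀ y ∈ Icc (0:ℝ) 1,
      y ^ α i * effRate p r (α i) (k i) (y + ∑ j ∈ Finset.univ.erase i, x j) t ≤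
        x i ^ α i * effRate p r (α i) (k i) (x i + ∑ j ∈ Finset.univ.erase i, x j) t

/-- `y` is the threshold `y^t_i` of a player, as defined in the paper for the
increasing and decreasing cases of the rate of return. -/
def IsThresholdY (p r : ℝ → ℝ) (α k t y : ℝ) : Prop :=
  (StrictMonoOn r (Icc (0:ℝ) 1) →
    ((∀ x ∈ St r t, effRate p r α k x t ≤ 0) → y = 0) ∧
    ((∃ x ∈ St r t, 0 < effRate p r α k x t) →
      ∃ z ∈ St r t, IsMaxOn (fun x => effRate p r α k x t) (St r t) z ∧
        y ∈ Ioo z 1 ∧ effRate p r α k y t = 0)) ∧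
  (StrictAntiOn r (Icc (0:ℝ) 1) →
    ((effRate p r α k 0 t ≤ 0) → y = 0) ∧
    ((0 < effRate p r α k 0 t) → y ∈ St r t ∧ effRate p r α k y t = 0))

/-- Pure Nash equilibrium under player-specific tax sensitivities `γ_i`
(all players have `α = 1` and common loss aversion `k`). -/
def IsPNEgamma {ι : Type*} [Fintype ι] [DecidableEq ι] (p r : ℝ → ℝ) (k t : ℝ)
    (γ : ι → ℝ) (x : ι → ℝ) : Prop :=
  (∀ i, x i ∈ Icc (0:ℝ) 1) ∧
    ∀ i, ∀ y ∈ Icc (0:ℝ) 1,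
      y * effRate p r 1 k (y + ∑ j ∈ Finset.univ.erase i, x j) (γ i * t) ≤
        x i * effRate p r 1 k (x i + ∑ j ∈ Finset.univ.erase i, x j) (γ i * t)

section Convexity

variable {𝕜 E β γ : Type*} [Semiring 𝕜] [PartialOrder 𝕜] [AddCommMonoid E] [AddCommMonoid β]
  [PartialOrder β] [AddCommMonoid γ] [PartialOrder γ] [SMul 𝕜 E] [SMul 𝕜 β] [SMul 𝕜 γ]

-- Unlike in `ConcaveOn.comp`, the image `f '' s` need not be convex.
theorem concaveOn_comp_of_mapsTo {g : β → γ} {f : E → β} {s : Set E} {t : Set β}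
    (hg : ConcaveOn 𝕜 t g) (hg_mono : MonotoneOn g t) (hf : ConcaveOn 𝕜 s f)
    (hst : MapsTo f s t) : ConcaveOn 𝕜 s (g ∘ f) :=
  ⟨hf.1, fun _ hx _ hy _ _ ha hb hab =>
    (hg.2 (hst hx) (hst hy) ha hb hab).trans
      (hg_mono (hg.1 (hst hx) (hst hy) ha hb hab) (hst (hf.1 hx hy ha hb hab))
        (hf.2 hx hy ha hb hab))⟩

end Convexity

section RealConvexity

variable {E : Type*} [AddCommGroup E] [Module ℝ E] {s : Set E} {f : E → ℝ}

theorem concaveOn_rpow_comp {α : ℝ} (hα : α ∈ Icc (0 : ℝ) 1) (hf : ConcaveOn ℝ s f)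
    (hf_nonneg : ∀ x ∈ s, 0 ≤ f x) : ConcaveOn ℝ s fun x => f x ^ α :=
  concaveOn_comp_of_mapsTo (concaveOn_rpow hα.1 hα.2) (monotoneOn_rpow_Ici_of_exponent_nonneg hα.1)
    hf hf_nonneg

theorem concaveOn_neg_inv_Ioi : ConcaveOn ℝ (Ioi (0 : ℝ)) fun u => -u⁻¹ := by
  have hinv : ConvexOn ℝ (Ioi (0 : ℝ)) fun u => u⁻¹ := by
    simpa only [zpow_neg_one] using convexOn_zpow (𝕜 := ℝ) (-1)
  exact hinv.neg

theorem monotoneOn_neg_inv_Ioi : MonotoneOn (fun u : ℝ => -u⁻¹) (Ioi 0) :=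
  fun _ hu _ _ huv => neg_le_neg (inv_anti₀ hu huv)

theorem convexOn_div_one_sub (hf : ConvexOn ℝ s f) (hf_lt : ∀ x ∈ s, f x < 1) :
    ConvexOn ℝ s fun x => f x / (1 - f x) := by
  have hconc : ConcaveOn ℝ s ((fun u : ℝ => -u⁻¹) ∘ fun x => 1 - f x) :=
    concaveOn_comp_of_mapsTo concaveOn_neg_inv_Ioi monotoneOn_neg_inv_Ioi
      ((concaveOn_const 1 hf.1).sub hf) fun x hx => sub_pos.2 (hf_lt x hx)
  refine (hconc.neg.add_const (-1)).congr fun x hx => ?_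
  have hne : 1 - f x ≠ 0 := (sub_pos.2 (hf_lt x hx)).ne'
  simp only [Pi.add_apply, Pi.neg_apply, Function.comp_apply]
  field_simp
  ring

end RealConvexity

section EffRate

variable {p r : ℝ → ℝ} {α k t x y z : ℝ}

theorem effRate_of_mem_St (hx : x ∈ St r t) :
    effRate p r α k x t = (r x - t) ^ α * (1 - p x) - k * (1 + t) ^ α * p x :=
  if_pos hx.2

theorem St_subset_St_of_le {t' : ℝ} (h : t ≤ t') : St r t' ⊆ St r t :=
  fun _ hx => ⟨hx.1, hx.2.trans (sub_le_sub_left h _)⟩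

theorem mem_St_of_effRate_pos (hpx : p x ∈ Icc (0 : ℝ) 1) (hk : 0 ≤ k) (ht : 0 ≤ t)
    (hx : x ∈ Icc (0 : ℝ) 1) (hpos : 0 < effRate p r α k x t) : x ∈ St r t := by
  refine ⟨hx, ?_⟩
  by_contra! hneg
  have hloss : 0 ≤ (t - r x) ^ α * (1 - p x) :=
    mul_nonneg (rpow_nonneg (by linarith) α) (sub_nonneg.2 hpx.2)
  have hfail : 0 ≤ (1 + t) ^ α * p x := mul_nonneg (by positivity) hpx.1
  rw [effRate, if_neg hneg.not_ge] at hpos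
  linarith [mul_nonneg hk (add_nonneg hloss hfail)]

theorem effRate_neg_of_failure_eq_one (hpx : p x = 1) (hk : 0 < k) (ht : 0 ≤ t) :
    effRate p r α k x t < 0 := by
  have hfail : 0 < k * (1 + t) ^ α := by positivity
  rw [effRate, hpx]
  split_ifs <;> linarith

theorem effRate_antitoneOn_tax (hpx : p x ∈ Icc (0 : ℝ) 1) (hα : 0 ≤ α) (hk : 0 ≤ k) :
    AntitoneOn (effRate p r α k x) (Icc 0 (r x)) := by
  intro t ht t' ht' htt'
  simp only [effRate, if_pos (sub_nonneg.2 ht.2), if_pos (sub_nonneg.2 ht'.2)]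
  have hr := sub_nonneg.2 ht'.2
  have hq := sub_nonneg.2 hpx.2
  have h0 := ht.1
  have hp := hpx.1
  gcongr

theorem effRate_antitoneOn_St (hpm : MonotoneOn p (Icc 0 1)) (hp1 : p 1 ≤ 1)
    (hr : AntitoneOn r (Icc 0 1)) (hα : 0 ≤ α) (hk : 0 ≤ k) (ht : 0 ≤ t) :
    AntitoneOn (fun x => effRate p r α k x t) (St r t) := by
  intro x hx y hy hxy
  have hp := hpm hx.1 hy.1 hxy
  have hr := hr hx.1 hy.1 hxy
  have hrx := hx.2
  have hry := hy.2
  have hqy : 0 ≤ 1 - p y := sub_nonneg.2 ((hpm hy.1 ⟨zero_le_one, le_rfl⟩ hy.1.2).trans hp1)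
  simp only [effRate_of_mem_St hx, effRate_of_mem_St hy]
  gcongr

/-- The effective rate of return per unit of survival probability `1 - p x`, on `St r t`. It has
the sign of `effRate` there, and unlike `effRate` it is concave. -/
def effRatePerSurvival (p r : ℝ → ℝ) (α k x t : ℝ) : ℝ :=
  (r x - t) ^ α - k * (1 + t) ^ α * (p x / (1 - p x))

theorem effRate_eq_mul_effRatePerSurvival (hx : x ∈ St r t) (hpx : p x < 1) :
    effRate p r α k x t = (1 - p x) * effRatePerSurvival p r α k x t := by
  have hne : 1 - p x ≠ 0 := (sub_pos.2 hpx).ne'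
  rw [effRate_of_mem_St hx, effRatePerSurvival]
  field_simp

theorem convex_St (hr : ConcaveOn ℝ (Icc 0 1) r) : Convex ℝ (St r t) := by
  simpa only [St, sub_nonneg] using hr.convex_ge t

theorem concaveOn_effRatePerSurvival (hpc : ConvexOn ℝ (Ico 0 1) p) (hp_lt : ∀ x ∈ Ico 0 1, p x < 1)
    (hr : ConcaveOn ℝ (Icc 0 1) r) (hα : α ∈ Icc (0 : ℝ) 1) (hk : 0 ≤ k) (ht : 0 ≤ t) :
    ConcaveOn ℝ (St r t ∩ Iio 1) fun x => effRatePerSurvival p r α k x t := by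
  have hconv : Convex ℝ (St r t ∩ Iio 1) := (convex_St hr).inter (convex_Iio 1)
  have hgain : ConcaveOn ℝ (St r t ∩ Iio 1) fun x => (r x - t) ^ α :=
    concaveOn_rpow_comp hα ((hr.subset (fun _ hx => hx.1.1) hconv).sub (convexOn_const t hconv))
      fun _ hx => hx.1.2
  have hodds : ConvexOn ℝ (St r t ∩ Iio 1) fun x => p x / (1 - p x) :=
    (convexOn_div_one_sub hpc hp_lt).subset (fun _ hx => ⟨hx.1.1.1, hx.2⟩) hconv
  exact hgain.sub (hodds.smul (by positivity : 0 ≤ k * (1 + t) ^ α))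

end EffRate

/-- The effective rate of return at tax rate `t` comes down to zero at `y < 1`, after having been
positive somewhere to the left of `y` in `St r t`. A nontrivial threshold `y^t_i` is such a point,
whether `r` is increasing or decreasing. -/
structure IsDownCrossing (p r : ℝ → ℝ) (α k t y : ℝ) : Prop where
  mem_St : y ∈ St r t
  lt_one : y < 1
  effRate_eq_zero : effRate p r α k y t = 0
  exists_pos_left : ∃ z ∈ St r t, z < y ∧ 0 < effRate p r α k z t

section Threshold

variable {p r : ℝ → ℝ} {α k t t₁ t₂ y y₁ y₂ : ℝ}

theorem IsDownCrossing.effRate_neg_of_gt (h : IsDownCrossing p r α k t y)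
    (hpc : ConvexOn ℝ (Ico 0 1) p) (hp_lt : ∀ x ∈ Ico 0 1, p x < 1)
    (hr : ConcaveOn ℝ (Icc 0 1) r) (hα : α ∈ Icc (0 : ℝ) 1) (hk : 0 ≤ k) (ht : 0 ≤ t)
    {w : ℝ} (hw : w ∈ St r t) (hyw : y < w) (hw1 : w < 1) : effRate p r α k w t < 0 := by
  obtain ⟨z, hz, hzy, hz_pos⟩ := h.exists_pos_left
  have hlt_one : ∀ x ∈ St r t, x < 1 → p x < 1 := fun x hx hx1 => hp_lt x ⟨hx.1.1, hx1⟩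
  have hz1 : z < 1 := hzy.trans h.lt_one
  have hy_zero := h.effRate_eq_zero
  have hpz := hlt_one z hz hz1
  have hpy := hlt_one y h.mem_St h.lt_one
  have hpw := hlt_one w hw hw1
  rw [effRate_eq_mul_effRatePerSurvival hz hpz, mul_pos_iff_of_pos_left (sub_pos.2 hpz)] at hz_pos
  rw [effRate_eq_mul_effRatePerSurvival h.mem_St hpy, mul_eq_zero_iff_left (sub_pos.2 hpy).ne']
    at hy_zero
  rw [effRate_eq_mul_effRatePerSurvival hw hpw]
  have hyzw : y ∈ openSegment ℝ z w := by
    rw [openSegment_eq_Ioo (hzy.trans hyw)]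
    exact ⟨hzy, hyw⟩
  have hw_neg : effRatePerSurvival p r α k w t < effRatePerSurvival p r α k y t :=
    (concaveOn_effRatePerSurvival hpc hp_lt hr hα hk ht).lt_right_of_left_lt ⟨hz, hz1⟩ ⟨hw, hw1⟩
      hyzw (hy_zero.trans_lt hz_pos)
  exact mul_neg_of_pos_of_neg (sub_pos.2 hpw) (hw_neg.trans_eq hy_zero)

theorem IsDownCrossing.le_of_tax_le (h₁ : IsDownCrossing p r α k t₁ y₁)
    (h₂ : IsDownCrossing p r α k t₂ y₂) (hpc : ConvexOn ℝ (Ico 0 1) p)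
    (hp : ∀ x ∈ Ico 0 1, p x ∈ Ico (0 : ℝ) 1) (hr : ConcaveOn ℝ (Icc 0 1) r)
    (hα : α ∈ Icc (0 : ℝ) 1) (hk : 0 ≤ k) (ht₂ : 0 ≤ t₂) (ht : t₂ ≤ t₁) : y₁ ≤ y₂ := by
  by_contra! hlt
  have hy₁ : y₁ ∈ St r t₂ := St_subset_St_of_le ht h₁.mem_St
  have hneg : effRate p r α k y₁ t₂ < 0 :=
    h₂.effRate_neg_of_gt hpc (fun x hx => (hp x hx).2) hr hα hk ht₂ hy₁ hlt h₁.lt_one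
  have hpy₁ := Ico_subset_Icc_self (hp y₁ ⟨hy₁.1.1, h₁.lt_one⟩)
  have hanti : effRate p r α k y₁ t₁ ≤ effRate p r α k y₁ t₂ :=
    effRate_antitoneOn_tax hpy₁ hα.1 hk ⟨ht₂, sub_nonneg.1 hy₁.2⟩
      ⟨ht₂.trans ht, sub_nonneg.1 h₁.mem_St.2⟩ ht
  exact (h₁.effRate_eq_zero.symm.trans_le hanti).not_gt hneg

namespace IsThresholdY

theorem isDownCrossing_of_strictMonoOn (hy : IsThresholdY p r α k t y)
    (hr : StrictMonoOn r (Icc 0 1)) (hpos : ∃ x ∈ St r t, 0 < effRate p r α k x t) :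
    IsDownCrossing p r α k t y := by
  obtain ⟨z, hz, hz_max, hzy, hy_zero⟩ := (hy.1 hr).2 hpos
  obtain ⟨x, hx, hx_pos⟩ := hpos
  have hy01 : y ∈ Icc (0 : ℝ) 1 := ⟨hz.1.1.trans hzy.1.le, hzy.2.le⟩
  have hrzy : r z < r y := hr hz.1 hy01 hzy.1
  exact ⟨⟨hy01, hz.2.trans (sub_le_sub_right hrzy.le t)⟩, hzy.2, hy_zero,
    z, hz, hzy.1, hx_pos.trans_le (hz_max hx)⟩

theorem isDownCrossing_of_strictAntiOn (hy : IsThresholdY p r α k t y)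
    (hr : StrictAntiOn r (Icc 0 1)) (hpm : MonotoneOn p (Icc 0 1)) (hp1 : p 1 = 1)
    (hα : 0 ≤ α) (hk : 0 < k) (ht : 0 ≤ t) (hpos : ∃ x ∈ St r t, 0 < effRate p r α k x t) :
    IsDownCrossing p r α k t y := by
  obtain ⟨x, hx, hx_pos⟩ := hpos
  have h01 : (0 : ℝ) ∈ Icc (0 : ℝ) 1 := ⟨le_rfl, zero_le_one⟩
  have h0 : (0 : ℝ) ∈ St r t :=
    ⟨h01, hx.2.trans (sub_le_sub_right (hr.antitoneOn h01 hx.1 hx.1.1) t)⟩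
  have h0_pos : 0 < effRate p r α k 0 t :=
    hx_pos.trans_le (effRate_antitoneOn_St hpm hp1.le hr.antitoneOn hα hk.le ht h0 hx hx.1.1)
  obtain ⟨hyS, hy_zero⟩ := (hy.2 hr).2 h0_pos
  have hy_ne_one : y ≠ 1 := by
    rintro rfl
    exact (effRate_neg_of_failure_eq_one hp1 hk ht).ne hy_zero
  have hy_ne_zero : 0 ≠ y := by
    rintro rfl
    exact h0_pos.ne' hy_zero
  exact ⟨hyS, hyS.1.2.lt_of_ne hy_ne_one, hy_zero, 0, h0, hyS.1.1.lt_of_ne hy_ne_zero, h0_pos⟩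

theorem isDownCrossing (hy : IsThresholdY p r α k t y)
    (hr : StrictMonoOn r (Icc 0 1) ∨ StrictAntiOn r (Icc 0 1)) (hpm : MonotoneOn p (Icc 0 1))
    (hp1 : p 1 = 1) (hα : 0 ≤ α) (hk : 0 < k) (ht : 0 ≤ t)
    (hpos : ∃ x ∈ St r t, 0 < effRate p r α k x t) : IsDownCrossing p r α k t y :=
  hr.elim (fun h => hy.isDownCrossing_of_strictMonoOn h hpos)
    fun h => hy.isDownCrossing_of_strictAntiOn h hpm hp1 hα hk ht hpos

theorem eq_zero (hy : IsThresholdY p r α k t y)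
    (hr : StrictMonoOn r (Icc 0 1) ∨ StrictAntiOn r (Icc 0 1)) (hp0 : p 0 ∈ Icc (0 : ℝ) 1)
    (hk : 0 ≤ k) (ht : 0 ≤ t) (hneg : ∀ x ∈ St r t, effRate p r α k x t ≤ 0) : y = 0 := by
  rcases hr with hr | hr
  · exact (hy.1 hr).1 hneg
  · refine (hy.2 hr).1 (not_lt.1 fun h0_pos => h0_pos.not_ge (hneg 0 ?_))
    exact mem_St_of_effRate_pos hp0 hk ht ⟨le_rfl, zero_le_one⟩ h0_pos

theorem le_of_tax_le (h₁ : IsThresholdY p r α k t₁ y₁) (h₂ : IsThresholdY p r α k t₂ y₂)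
    (hpc : ConvexOn ℝ (Ico 0 1) p) (hpm : MonotoneOn p (Icc 0 1))
    (hp : ∀ x ∈ Ico 0 1, p x ∈ Ico (0 : ℝ) 1) (hp1 : p 1 = 1)
    (hrc : ConcaveOn ℝ (Icc 0 1) r) (hr : StrictMonoOn r (Icc 0 1) ∨ StrictAntiOn r (Icc 0 1))
    (hα : α ∈ Icc (0 : ℝ) 1) (hk : 0 < k) (ht₂ : 0 ≤ t₂) (ht : t₂ ≤ t₁) : y₁ ≤ y₂ := by
  have ht₁ : 0 ≤ t₁ := ht₂.trans ht
  have hp0 : p 0 ∈ Ico (0 : ℝ) 1 := hp 0 ⟨le_rfl, zero_lt_one⟩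
  have hp01 : ∀ x ∈ Icc (0 : ℝ) 1, p x ∈ Icc (0 : ℝ) 1 := fun x hx =>
    ⟨hp0.1.trans (hpm.mapsTo_Icc hx).1, (hpm.mapsTo_Icc hx).2.trans hp1.le⟩
  have hcross₂ := h₂.isDownCrossing hr hpm hp1 hα.1 hk ht₂
  by_cases hpos₁ : ∃ x ∈ St r t₁, 0 < effRate p r α k x t₁
  · have hcross₁ := h₁.isDownCrossing hr hpm hp1 hα.1 hk ht₁ hpos₁
    obtain ⟨x, hx, hx_pos⟩ := hpos₁
    have hx₂ : x ∈ St r t₂ := St_subset_St_of_le ht hx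
    have hanti : effRate p r α k x t₁ ≤ effRate p r α k x t₂ :=
      effRate_antitoneOn_tax (hp01 x hx.1) hα.1 hk.le ⟨ht₂, sub_nonneg.1 hx₂.2⟩
        ⟨ht₁, sub_nonneg.1 hx.2⟩ ht
    exact hcross₁.le_of_tax_le (hcross₂ ⟨x, hx₂, hx_pos.trans_le hanti⟩) hpc hp hrc hα hk.le ht₂ ht
  · push Not at hpos₁
    rw [h₁.eq_zero hr (hp01 0 ⟨le_rfl, zero_le_one⟩) hk.le ht₁ hpos₁]
    by_cases hpos₂ : ∃ x ∈ St r t₂, 0 < effRate p r α k x t₂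
    · exact (hcross₂ hpos₂).mem_St.1.1
    · push Not at hpos₂
      exact (h₂.eq_zero hr (hp01 0 ⟨le_rfl, zero_le_one⟩) hk.le ht₂ hpos₂).ge

end IsThresholdY

end Threshold

namespace FailureProb

variable {p : ℝ → ℝ}

theorem mem_Ico (hp : FailureProb p) : ∀ x ∈ Ico (0 : ℝ) 1, p x ∈ Ico (0 : ℝ) 1 := by
  intro x hx
  obtain ⟨m, hxm, hm1⟩ := exists_between hx.2
  exact ⟨(hp.mem_unit x).1,
    (hp.strictMonoOn hx ⟨hx.1.trans hxm.le, hm1⟩ hxm).trans_le (hp.mem_unit m).2⟩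

theorem monotoneOn (hp : FailureProb p) : MonotoneOn p (Icc 0 1) := by
  intro x hx y hy hxy
  rcases hy.2.lt_or_eq with hy1 | rfl
  · exact hp.strictMonoOn.monotoneOn ⟨hx.1, hxy.trans_lt hy1⟩ ⟨hy.1, hy1⟩ hxy
  · exact (hp.mem_unit x).2.trans_eq (hp.eq_one 1 le_rfl).symm

end FailureProb

theorem statement4_general {ι : Type*} {p r : ℝ → ℝ} {α k : ι → ℝ}
    (hpc : ConvexOn ℝ (Ico 0 1) p) (hpm : MonotoneOn p (Icc 0 1))
    (hp : ∀ x ∈ Ico 0 1, p x ∈ Ico (0 : ℝ) 1) (hp1 : p 1 = 1)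
    (hrc : ConcaveOn ℝ (Icc 0 1) r) (hr : StrictMonoOn r (Icc 0 1) ∨ StrictAntiOn r (Icc 0 1))
    (hα : ∀ i, α i ∈ Ioc (0 : ℝ) 1) (hk : ∀ i, 0 < k i)
    {t₁ t₂ : ℝ} (ht₂ : 0 ≤ t₂) (ht : t₂ ≤ t₁) {y₁ y₂ : ι → ℝ}
    (hy₁ : ∀ i, IsThresholdY p r (α i) (k i) t₁ (y₁ i))
    (hy₂ : ∀ i, IsThresholdY p r (α i) (k i) t₂ (y₂ i)) :
    (∀ i, y₁ i ≤ y₂ i) ∧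
      ∀ X₁ X₂ : ℝ, X₂ ≤ X₁ → {i | X₁ < y₁ i} ⊆ {i | X₂ < y₂ i} := by
  have hle : ∀ i, y₁ i ≤ y₂ i := fun i =>
    (hy₁ i).le_of_tax_le (hy₂ i) hpc hpm hp hp1 hrc hr (Ioc_subset_Icc_self (hα i)) (hk i)
      ht₂ ht
  exact ⟨hle, fun _ _ hX i hi => (hX.trans_lt hi).trans_le (hle i)⟩

/-- if `t_1 > t_2`, then `y^{t_1}_i ≤ y^{t_2}_i` for every player,
and if moreover the PNE utilization at `t_1` exceeds that at `t_2`, then the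
support of the PNE at `t_1` is contained in the support at `t_2`. -/
theorem statement4 {ι : Type*} [Fintype ι] [DecidableEq ι] [Nonempty ι]
    (p r : ℝ → ℝ) (α k : ι → ℝ)
    (hp : FailureProb p) (hr : RateOfReturn r)
    (hα : ∀ i, α i ∈ Ioc (0:ℝ) 1) (hk : ∀ i, 0 < k i)
    (t1 t2 : ℝ) (ht2 : 0 ≤ t2) (h21 : t2 < t1) (h1 : t1 < tbar p r α k)
    (y1 y2 : ι → ℝ)
    (hy1 : ∀ i, y1 i ∈ Icc (0:ℝ) 1 ∧ IsThresholdY p r (α i) (k i) t1 (y1 i))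
    (hy2 : ∀ i, y2 i ∈ Icc (0:ℝ) 1 ∧ IsThresholdY p r (α i) (k i) t2 (y2 i))
    (x1 x2 : ι → ℝ)
    (hx1 : IsPNE p r α k t1 x1) (hx2 : IsPNE p r α k t2 x2) :
    (∀ i, y1 i ≤ y2 i) ∧
      (∑ i, x2 i < ∑ i, x1 i →
        {i : ι | ∑ j, x1 j < y1 i} ⊆ {i : ι | ∑ j, x2 j < y2 i}) := by
  have h := statement4_general hp.convexOn hp.monotoneOn hp.mem_Ico (hp.eq_one 1 le_rfl)
    hr.concaveOn hr.strictMonoOrAnti hα hk ht2 h21.le (fun i => (hy1 i).2) fun i => (hy2 i).2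
  exact ⟨h.1, fun hlt => h.2 _ _ hlt.le⟩
end
end

section
/- In a Fragile CPR game at tax rate t = 0, let x_OPT = (x_{1,OPT},…,x_{n,OPT}) ∈ [0,1]^n be any profile maximizing the social welfare Ψ(x) = Σ_i x_i^{α_i} f_i(x_T, 0) over [0,1]^n, and let x^0_OPT be its total investment. Then x^0_OPT ≤ x^0_NE, where x^0_NE is the total investment at the unique pure Nash equilibrium at t = 0. This holds for heterogeneous prospect-theoretic preferences α_i ∈ (0,1], k_i > 0. -/
/-!
Write `F i` for the untaxed effective rate of return of player `i`. On `(0, 1)` it is the product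
of the concave function `1 - p` and of `r ^ α i - k i * p / (1 - p)`, which is concave because
`1 / (1 - p)` is convex; hence `log (F i)` is concave wherever `F i` is positive, and the
logarithmic derivative of `F i` is decreasing there.

Let `X` be the total of an optimum `x` and `N` the total of an equilibrium `y`, and suppose `N < X`.
At an optimum the marginal utility of every active player compensates the same total externality,
so all active players have a positive return at `X`. Each of them could have moved the equilibrium
total up to `X`, hence is active at the equilibrium too, where her first-order condition reads
`logDeriv (F j) N = -(α j / y j)`. By log-concavity `logDeriv (F j) X ≤ -(α j / y j) < 0`. In
particular the externalities at the optimum are negative, so the private marginal utility of player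
`j` is nonnegative there, that is `-(α j / x j) ≤ logDeriv (F j) X`. Comparing the two bounds gives
`x j ≤ y j` for all `j`, which contradicts `N < X`.
-/

open Real Set

noncomputable section

section LogConcavity

variable {E : Type*} [AddCommGroup E] [Module ℝ E] {s : Set E} {f g : E → ℝ}

lemma concaveOn_comp_of_mapsTo_s5 {φ : ℝ → ℝ} {t : Set ℝ} (hφ : ConcaveOn ℝ t φ)
    (hmono : MonotoneOn φ t) (hf : ConcaveOn ℝ s f) (hmaps : MapsTo f s t) :
    ConcaveOn ℝ s (fun x => φ (f x)) :=
  ⟨hf.1, fun _ hx _ hy _ _ ha hb hab =>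
    (hφ.2 (hmaps hx) (hmaps hy) ha hb hab).trans <|
      hmono (hφ.1 (hmaps hx) (hmaps hy) ha hb hab) (hmaps (hf.1 hx hy ha hb hab))
        (hf.2 hx hy ha hb hab)⟩

lemma concaveOn_log_comp (hf : ConcaveOn ℝ s f) (hpos : ∀ x ∈ s, 0 < f x) :
    ConcaveOn ℝ s (fun x => log (f x)) :=
  concaveOn_comp_of_mapsTo_s5 strictConcaveOn_log_Ioi.concaveOn strictMonoOn_log.monotoneOn hf hpos

lemma convexOn_inv_of_concaveOn (hf : ConcaveOn ℝ s f) (hpos : ∀ x ∈ s, 0 < f x) :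
    ConvexOn ℝ s (fun x => (f x)⁻¹) := by
  have hinv : ConcaveOn ℝ (Ioi (0 : ℝ)) (fun u => -u⁻¹) := by
    have hconv : ConvexOn ℝ (Ioi (0 : ℝ)) (fun u => u⁻¹) := by
      simpa only [zpow_neg_one] using convexOn_zpow (𝕜 := ℝ) (-1)
    exact hconv.neg
  have hmono : MonotoneOn (fun u : ℝ => -u⁻¹) (Ioi 0) := fun u hu _ _ huv =>
    neg_le_neg (inv_anti₀ hu huv)
  exact neg_concaveOn_iff.1 (concaveOn_comp_of_mapsTo_s5 (φ := fun u => -u⁻¹) hinv hmono hf hpos)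

lemma concaveOn_log_of_concaveOn_div (hg : ConcaveOn ℝ s g) (hpos : ∀ x ∈ s, 0 < g x)
    (hfg : ConcaveOn ℝ s (fun x => f x / g x)) :
    ConcaveOn ℝ {x ∈ s | 0 < f x} (fun x => log (f x)) := by
  have hset : {x ∈ s | 0 < f x} = {x ∈ s | 0 < f x / g x} :=
    Set.ext fun x => and_congr_right fun hx => (div_pos_iff_of_pos_right (hpos x hx)).symm
  have hconv : Convex ℝ {x ∈ s | 0 < f x} := hset ▸ hfg.convex_gt 0
  have hlog_div := concaveOn_log_comp (hfg.subset (sep_subset _ _) hconv)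
    fun x hx => div_pos hx.2 (hpos x hx.1)
  have hlog := concaveOn_log_comp (hg.subset (sep_subset _ _) hconv) fun x hx => hpos x hx.1
  refine (hlog_div.add hlog).congr fun x hx => ?_
  have hgx := hpos x hx.1
  rw [Pi.add_apply, ← log_mul (div_pos hx.2 hgx).ne' hgx.ne', div_mul_cancel₀ _ hgx.ne']

lemma antitoneOn_logDeriv_of_concaveOn_log {f : ℝ → ℝ} {s : Set ℝ}
    (hlog : ConcaveOn ℝ s (fun x => log (f x))) (hdiff : ∀ x ∈ s, DifferentiableAt ℝ f x)
    (hne : ∀ x ∈ s, f x ≠ 0) : AntitoneOn (logDeriv f) s :=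
  (hlog.antitoneOn_deriv fun x hx => (hdiff x hx).log (hne x hx)).congr fun x hx =>
    deriv_log_comp_eq_logDeriv (hdiff x hx) (hne x hx)

end LogConcavity

/-- A rate of return of a fragile resource, as a function of the utilization: it is differentiable
on `(0, 1)`, log-concave where it is positive, and nonpositive once the resource is fully
utilized. -/
structure FragileReturn (F : ℝ → ℝ) : Prop where
  differentiableOn : DifferentiableOn ℝ F (Ioo 0 1)
  concaveOn_log : ConcaveOn ℝ {u ∈ Ioo 0 1 | 0 < F u} (fun u => log (F u))
  nonpos : ∀ u, 1 ≤ u → F u ≤ 0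

namespace FragileReturn

variable {F : ℝ → ℝ}

lemma differentiableAt (hF : FragileReturn F) {u : ℝ} (hu : u ∈ Ioo (0 : ℝ) 1) :
    DifferentiableAt ℝ F u :=
  hF.differentiableOn.differentiableAt (Ioo_mem_nhds hu.1 hu.2)

lemma antitoneOn_logDeriv (hF : FragileReturn F) :
    AntitoneOn (logDeriv F) {u ∈ Ioo 0 1 | 0 < F u} :=
  antitoneOn_logDeriv_of_concaveOn_log hF.concaveOn_log (fun _ hu => hF.differentiableAt hu.1)
    fun _ hu => hu.2.ne'

end FragileReturn

section Game

variable {ι : Type*} [Fintype ι] {F : ι → ℝ → ℝ} {α x : ι → ℝ}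

/-- The expected utility of player `i` at the investment profile `x`, where `F i` is her rate of
return as a function of the total investment. -/
def utility (F : ι → ℝ → ℝ) (α : ι → ℝ) (i : ι) (x : ι → ℝ) : ℝ :=
  x i ^ α i * F i (∑ l, x l)

/-- The profile `x` maximizes the social welfare, the sum of all utilities. -/
def IsSocialOptimum (F : ι → ℝ → ℝ) (α x : ι → ℝ) : Prop :=
  (∀ i, x i ∈ Icc (0 : ℝ) 1) ∧
    ∀ z : ι → ℝ, (∀ i, z i ∈ Icc (0 : ℝ) 1) → ∑ i, utility F α i z ≤ ∑ i, utility F α i x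

/-- The profile `x` is a pure Nash equilibrium: no player gains by a unilateral deviation, which
is encoded by `Function.update`. -/
def IsNash [DecidableEq ι] (F : ι → ℝ → ℝ) (α x : ι → ℝ) : Prop :=
  (∀ i, x i ∈ Icc (0 : ℝ) 1) ∧
    ∀ i, ∀ z ∈ Icc (0 : ℝ) 1, utility F α i (Function.update x i z) ≤ utility F α i x

lemma pos_and_pos_of_utility_pos {i : ι} (hα : α i ≠ 0) (hx : 0 ≤ x i)
    (h : 0 < utility F α i x) : 0 < x i ∧ 0 < F i (∑ l, x l) := by
  have hxi : 0 < x i := hx.lt_of_ne' fun h0 => by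
    simp [utility, h0, zero_rpow hα] at h
  exact ⟨hxi, pos_of_mul_pos_right h (rpow_nonneg hx _)⟩

lemma hasDerivAt_utility_update [DecidableEq ι] (i : ι) {j : ι} (hj : x j ≠ 0)
    (hF : DifferentiableAt ℝ (F i) (∑ l, x l)) :
    HasDerivAt (fun z => utility F α i (Function.update x j z))
      (x i ^ α i * ((if i = j then α i / x i * F i (∑ l, x l) else 0) +
        deriv (F i) (∑ l, x l))) (x j) := by
  have hpow : HasDerivAt (fun z => Function.update x j z i ^ α i)
      (if i = j then x i ^ α i * (α i / x i) else 0) (x j) := by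
    rcases eq_or_ne i j with rfl | hij
    · simp only [Function.update_self, if_true]
      convert hasDerivAt_rpow_const (p := α i) (Or.inl hj) using 1
      rw [rpow_sub_one hj]
      ring
    · simpa only [Function.update_of_ne hij, if_neg hij] using hasDerivAt_const (x j) (x i ^ α i)
  have htotal : HasDerivAt (fun z => ∑ l, Function.update x j z l) 1 (x j) := by
    simpa using HasDerivAt.fun_sum (u := Finset.univ)
      fun l _ => hasDerivAt_pi.1 (hasDerivAt_update x j (x j)) l
  have hreturn : HasDerivAt (fun z => F i (∑ l, Function.update x j z l))
      (deriv (F i) (∑ l, x l)) (x j) := by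
    simpa only [Function.comp_def, mul_one] using
      hF.hasDerivAt.comp_of_eq (x j) htotal (by rw [Function.update_eq_self])
  refine (hpow.mul hreturn).congr_deriv ?_
  rw [Function.update_eq_self]
  split_ifs <;> ring

lemma IsNash.logDeriv_eq [DecidableEq ι] (hx : IsNash F α x) {j : ι} (hj : x j ∈ Ioo (0 : ℝ) 1)
    (hdiff : DifferentiableAt ℝ (F j) (∑ l, x l)) (hne : F j (∑ l, x l) ≠ 0) :
    logDeriv (F j) (∑ l, x l) = -(α j / x j) := by
  have hmax : IsLocalMax (fun z => utility F α j (Function.update x j z)) (x j) := by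
    filter_upwards [Icc_mem_nhds hj.1 hj.2] with z hz
    simpa only [Function.update_eq_self] using hx.2 j z hz
  have hfoc := hmax.hasDerivAt_eq_zero (hasDerivAt_utility_update j hj.1.ne' hdiff)
  rw [if_pos rfl, mul_eq_zero, or_iff_right (rpow_pos_of_pos hj.1 _).ne'] at hfoc
  rw [logDeriv_apply, div_eq_iff hne]
  linarith

lemma IsNash.pos_and_pos_of_sum_lt [DecidableEq ι] (hx : IsNash F α x) {j : ι} (hα : α j ≠ 0)
    {X : ℝ} (hlt : ∑ l, x l < X) (hX : X ≤ 1) (hF : 0 < F j X) :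
    0 < x j ∧ 0 < F j (∑ l, x l) := by
  have hle : x j ≤ ∑ l, x l :=
    Finset.single_le_sum (fun l _ => (hx.1 l).1) (Finset.mem_univ j)
  set z := X - (∑ l, x l - x j) with hz
  have hz0 : 0 < z := by linarith [(hx.1 j).1]
  have htotal : ∑ l, Function.update x j z l = X := by
    rw [Finset.sum_update_of_mem (Finset.mem_univ j), Finset.sdiff_singleton_eq_erase,
      Finset.sum_erase_eq_sub (Finset.mem_univ j), hz, sub_add_cancel]
  have hdev : utility F α j (Function.update x j z) ≤ utility F α j x :=
    hx.2 j z ⟨hz0.le, by linarith⟩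
  rw [utility, htotal, Function.update_self] at hdev
  exact pos_and_pos_of_utility_pos hα (hx.1 j).1
    ((mul_pos (rpow_pos_of_pos hz0 _) hF).trans_le hdev)

lemma IsNash.pos_and_logDeriv_le [DecidableEq ι] (hx : IsNash F α x) {j : ι}
    (hFj : FragileReturn (F j)) (hα : α j ≠ 0) {X : ℝ} (hlt : ∑ l, x l < X) (hX : X < 1)
    (hF : 0 < F j X) : 0 < x j ∧ logDeriv (F j) X ≤ -(α j / x j) := by
  obtain ⟨hxj, hFN⟩ := hx.pos_and_pos_of_sum_lt hα hlt hX.le hF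
  have hle : x j ≤ ∑ l, x l :=
    Finset.single_le_sum (fun l _ => (hx.1 l).1) (Finset.mem_univ j)
  have hN : ∑ l, x l ∈ Ioo (0 : ℝ) 1 := ⟨hxj.trans_le hle, hlt.trans hX⟩
  refine ⟨hxj, ?_⟩
  rw [← hx.logDeriv_eq ⟨hxj, hle.trans_lt hN.2⟩ (hFj.differentiableAt hN) hFN.ne']
  exact hFj.antitoneOn_logDeriv ⟨hN, hFN⟩ ⟨⟨hN.1.trans hlt, hX⟩, hF⟩ hlt.le

namespace IsSocialOptimum

lemma sum_utility_pos (hx : IsSocialOptimum F α x) (hα : ∀ i, α i ≠ 0)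
    (hpos : ∃ i, ∃ a ∈ Ioc (0 : ℝ) 1, 0 < F i a) : 0 < ∑ i, utility F α i x := by
  classical
  obtain ⟨i, a, ha, hFa⟩ := hpos
  have hmem : ∀ l, (Pi.single i a : ι → ℝ) l ∈ Icc (0 : ℝ) 1 := fun l => by
    rcases eq_or_ne l i with rfl | hl
    · simpa only [Pi.single_eq_same] using Ioc_subset_Icc_self ha
    · simp [hl]
  have hsingle : ∑ l, utility F α l (Pi.single i a) = a ^ α i * F i a := by
    rw [Finset.sum_eq_single i (fun l _ hl => by simp [utility, hl, zero_rpow (hα l)]) (by simp)]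
    simp [utility]
  exact (mul_pos (rpow_pos_of_pos ha.1 _) hFa).trans_le (hsingle ▸ hx.2 _ hmem)

lemma sum_lt_one (hx : IsSocialOptimum F α x) (hF : ∀ i u, 1 ≤ u → F i u ≤ 0)
    (hW : 0 < ∑ i, utility F α i x) : ∑ l, x l < 1 := by
  by_contra! h
  exact hW.not_ge <| Finset.sum_nonpos fun i _ =>
    mul_nonpos_of_nonneg_of_nonpos (rpow_nonneg (hx.1 i).1 _) (hF i _ h)

/-- Changing `x j` affects the other players only through the total, so the right-hand side is
common to all active players. -/
lemma marginal_utility_eq (hx : IsSocialOptimum F α x)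
    (hdiff : ∀ i, DifferentiableAt ℝ (F i) (∑ l, x l)) {j : ι} (hj : x j ∈ Ioo (0 : ℝ) 1) :
    x j ^ α j * (α j / x j * F j (∑ l, x l)) = -∑ i, x i ^ α i * deriv (F i) (∑ l, x l) := by
  classical
  have hmax : IsLocalMax (fun z => ∑ i, utility F α i (Function.update x j z)) (x j) := by
    filter_upwards [Icc_mem_nhds hj.1 hj.2] with z hz
    simpa only [Function.update_eq_self] using hx.2 (Function.update x j z)
      ((Function.forall_update_iff x fun _ u => u ∈ Icc (0 : ℝ) 1).2 ⟨hz, fun i _ => hx.1 i⟩)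
  have hfoc := hmax.hasDerivAt_eq_zero <|
    HasDerivAt.fun_sum fun i _ => hasDerivAt_utility_update i hj.1.ne' (hdiff i)
  simp only [mul_add, mul_ite, mul_zero, Finset.sum_add_distrib, Finset.sum_ite_eq',
    Finset.mem_univ, if_true] at hfoc
  exact eq_neg_of_add_eq_zero_left hfoc

lemma return_pos (hx : IsSocialOptimum F α x) (hα : ∀ i, 0 < α i)
    (hdiff : ∀ i, DifferentiableAt ℝ (F i) (∑ l, x l)) (hlt : ∑ l, x l < 1)
    (hW : 0 < ∑ i, utility F α i x) {j : ι} (hj : 0 < x j) : 0 < F j (∑ l, x l) := by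
  have hcoeff : ∀ i, 0 < x i → 0 < x i ^ α i * (α i / x i) := fun i hi =>
    mul_pos (rpow_pos_of_pos hi _) (div_pos (hα i) hi)
  have hmem : ∀ i, 0 < x i → x i ∈ Ioo (0 : ℝ) 1 := fun i hi =>
    ⟨hi, (Finset.single_le_sum (fun l _ => (hx.1 l).1) (Finset.mem_univ i)).trans_lt hlt⟩
  obtain ⟨i, -, hi⟩ : ∃ i ∈ Finset.univ, 0 < utility F α i x :=
    Finset.exists_lt_of_sum_lt (by simpa only [Finset.sum_const_zero] using hW)
  obtain ⟨hxi, hFi⟩ := pos_and_pos_of_utility_pos (hα i).ne' (hx.1 i).1 hi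
  have hmarginal := (hx.marginal_utility_eq hdiff (hmem j hj)).trans
    (hx.marginal_utility_eq hdiff (hmem i hxi)).symm
  rw [← mul_assoc, ← mul_assoc] at hmarginal
  exact pos_of_mul_pos_right (hmarginal ▸ mul_pos (hcoeff i hxi) hFi) (hcoeff j hj).le

lemma neg_div_le_logDeriv (hx : IsSocialOptimum F α x) (hα : ∀ i, α i ≠ 0)
    (hdiff : ∀ i, DifferentiableAt ℝ (F i) (∑ l, x l))
    (hderiv : ∀ i, 0 < x i → deriv (F i) (∑ l, x l) ≤ 0) {j : ι} (hj : x j ∈ Ioo (0 : ℝ) 1)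
    (hF : 0 < F j (∑ l, x l)) : -(α j / x j) ≤ logDeriv (F j) (∑ l, x l) := by
  have hexternality : ∀ i, x i ^ α i * deriv (F i) (∑ l, x l) ≤ 0 := fun i => by
    rcases (hx.1 i).1.eq_or_lt with h0 | hi
    · rw [← h0, zero_rpow (hα i), zero_mul]
    · exact mul_nonpos_of_nonneg_of_nonpos (rpow_nonneg hi.le _) (hderiv i hi)
  have hsum : ∑ i, x i ^ α i * deriv (F i) (∑ l, x l) ≤ x j ^ α j * deriv (F j) (∑ l, x l) := by
    classical
    rw [← Finset.add_sum_erase _ _ (Finset.mem_univ j)]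
    exact add_le_of_nonpos_right (Finset.sum_nonpos fun i _ => hexternality i)
  have hprivate : 0 ≤ x j ^ α j * (α j / x j * F j (∑ l, x l) + deriv (F j) (∑ l, x l)) := by
    rw [mul_add, hx.marginal_utility_eq hdiff hj]
    linarith
  have hnonneg := nonneg_of_mul_nonneg_right hprivate (rpow_pos_of_pos hj.1 _)
  rw [logDeriv_apply, le_div_iff₀ hF]
  linarith

end IsSocialOptimum

end Game

theorem statement5_general {ι : Type*} [Fintype ι] [DecidableEq ι] {F : ι → ℝ → ℝ}
    {α x y : ι → ℝ} (hF : ∀ i, FragileReturn (F i)) (hα : ∀ i, 0 < α i)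
    (hpos : ∃ i, ∃ a ∈ Ioc (0 : ℝ) 1, 0 < F i a) (hx : IsSocialOptimum F α x)
    (hy : IsNash F α y) : ∑ i, x i ≤ ∑ i, y i := by
  by_contra! hlt
  have hW := hx.sum_utility_pos (fun i => (hα i).ne') hpos
  have hX1 := hx.sum_lt_one (fun i => (hF i).nonpos) hW
  have hX0 : 0 < ∑ l, x l := (Finset.sum_nonneg fun i _ => (hy.1 i).1).trans_lt hlt
  have hdiff : ∀ i, DifferentiableAt ℝ (F i) (∑ l, x l) := fun i =>
    (hF i).differentiableAt ⟨hX0, hX1⟩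
  have hreturn : ∀ i, 0 < x i → 0 < F i (∑ l, x l) := fun i =>
    hx.return_pos hα hdiff hX1 hW
  have hnash : ∀ i, 0 < x i → 0 < y i ∧ logDeriv (F i) (∑ l, x l) ≤ -(α i / y i) := fun i hi =>
    hy.pos_and_logDeriv_le (hF i) (hα i).ne' hlt hX1 (hreturn i hi)
  have hderiv : ∀ i, 0 < x i → deriv (F i) (∑ l, x l) ≤ 0 := fun i hi => by
    obtain ⟨hyi, hlog⟩ := hnash i hi
    have hlog_nonpos := hlog.trans (neg_nonpos.2 (div_pos (hα i) hyi).le)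
    simpa only [zero_mul] using (div_le_iff₀ (hreturn i hi)).1 hlog_nonpos
  refine hlt.not_ge (Finset.sum_le_sum fun j _ => ?_)
  rcases (hx.1 j).1.eq_or_lt with h0 | hj
  · exact h0 ▸ (hy.1 j).1
  have hxj1 : x j < 1 :=
    (Finset.single_le_sum (fun l _ => (hx.1 l).1) (Finset.mem_univ j)).trans_lt hX1
  have hopt := hx.neg_div_le_logDeriv (fun i => (hα i).ne') hdiff hderiv ⟨hj, hxj1⟩ (hreturn j hj)
  obtain ⟨hyj, hlog⟩ := hnash j hj
  exact (div_le_div_iff_of_pos_left (hα j) hyj hj).1 (neg_le_neg_iff.1 (hopt.trans hlog))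

section EffectiveRate

variable {p r : ℝ → ℝ} {α k : ℝ}

lemma FailureProb.lt_one (hp : FailureProb p) {x : ℝ} (hx : x ∈ Ico (0 : ℝ) 1) : p x < 1 := by
  obtain ⟨y, hxy, hy⟩ := exists_between hx.2
  exact (hp.strictMonoOn hx ⟨hx.1.trans hxy.le, hy⟩ hxy).trans_le (hp.mem_unit y).2

lemma effRate_zero_eq {x : ℝ} (hr : 0 ≤ r x) :
    effRate p r α k x 0 = r x ^ α * (1 - p x) - k * p x := by
  simp [effRate, hr]

lemma effRate_le_effRate_zero {x t : ℝ} (hr : 0 ≤ r x) (hp : p x ∈ Icc (0 : ℝ) 1) (hα : 0 ≤ α)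
    (hk : 0 ≤ k) (ht : 0 ≤ t) : effRate p r α k x t ≤ effRate p r α k x 0 := by
  have hq : 0 ≤ 1 - p x := sub_nonneg.2 hp.2
  have hloss : k * p x ≤ k * ((1 + t) ^ α * p x) :=
    mul_le_mul_of_nonneg_left
      (le_mul_of_one_le_left hp.1 (one_le_rpow (le_add_of_nonneg_right ht) hα)) hk
  rw [effRate_zero_eq hr, effRate]
  split_ifs with hrt
  · have hgain : (r x - t) ^ α * (1 - p x) ≤ r x ^ α * (1 - p x) :=
      mul_le_mul_of_nonneg_right (rpow_le_rpow hrt (sub_le_self _ ht) hα) hq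
    linarith
  · have hgain : 0 ≤ r x ^ α * (1 - p x) := mul_nonneg (rpow_nonneg hr _) hq
    have htax : 0 ≤ k * ((t - r x) ^ α * (1 - p x)) :=
      mul_nonneg hk (mul_nonneg (rpow_nonneg (by linarith) _) hq)
    linarith

lemma differentiableOn_effRate_zero (hp : FailureProb p) (hr : RateOfReturn r) :
    DifferentiableOn ℝ (fun x => effRate p r α k x 0) (Ico 0 1) := by
  have hpd := hp.contDiffOn.differentiableOn one_ne_zero
  have hrd := (hr.contDiffOn.differentiableOn one_ne_zero).mono Ico_subset_Icc_self
  have hrpow : DifferentiableOn ℝ (fun x => r x ^ α) (Ico 0 1) :=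
    hrd.rpow_const fun x hx => Or.inl (hr.pos x (Ico_subset_Icc_self hx)).ne'
  exact ((hrpow.mul (hpd.const_sub 1)).sub (hpd.const_mul k)).congr fun x hx =>
    effRate_zero_eq (hr.pos x (Ico_subset_Icc_self hx)).le

lemma FailureProb.concaveOn_one_sub (hp : FailureProb p) :
    ConcaveOn ℝ (Ico 0 1) (fun x => 1 - p x) :=
  (concaveOn_const 1 (convex_Ico 0 1)).sub hp.convexOn

lemma concaveOn_effRate_zero_div (hp : FailureProb p) (hr : RateOfReturn r)
    (hα : α ∈ Icc (0 : ℝ) 1) (hk : 0 ≤ k) :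
    ConcaveOn ℝ (Ico 0 1) (fun x => effRate p r α k x 0 / (1 - p x)) := by
  have hq : ∀ x ∈ Ico (0 : ℝ) 1, 0 < 1 - p x := fun x hx => sub_pos.2 (hp.lt_one hx)
  have hr_nonneg : ∀ x ∈ Ico (0 : ℝ) 1, 0 ≤ r x := fun x hx =>
    (hr.pos x (Ico_subset_Icc_self hx)).le
  have hrpow : ConcaveOn ℝ (Ico 0 1) (fun x => r x ^ α) :=
    concaveOn_comp_of_mapsTo_s5 (concaveOn_rpow hα.1 hα.2)
      (monotoneOn_rpow_Ici_of_exponent_nonneg hα.1)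
      (hr.concaveOn.subset Ico_subset_Icc_self (convex_Ico 0 1)) hr_nonneg
  have hinv : ConvexOn ℝ (Ico 0 1) (fun x => k * (1 - p x)⁻¹) :=
    (convexOn_inv_of_concaveOn hp.concaveOn_one_sub hq).smul hk
  refine ((hrpow.sub hinv).add_const k).congr fun x hx => ?_
  have hqx := (hq x hx).ne'
  rw [effRate_zero_eq (hr_nonneg x hx)]
  simp only [Pi.add_apply, Pi.sub_apply]
  field_simp
  ring

lemma fragileReturn_effRate_zero (hp : FailureProb p) (hr : RateOfReturn r)
    (hα : α ∈ Icc (0 : ℝ) 1) (hk : 0 ≤ k) : FragileReturn (fun x => effRate p r α k x 0) where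
  differentiableOn := (differentiableOn_effRate_zero hp hr).mono Ioo_subset_Ico_self
  concaveOn_log :=
    have hsub {f : ℝ → ℝ} (hf : ConcaveOn ℝ (Ico 0 1) f) : ConcaveOn ℝ (Ioo 0 1) f :=
      hf.subset Ioo_subset_Ico_self (convex_Ioo 0 1)
    concaveOn_log_of_concaveOn_div (hsub hp.concaveOn_one_sub)
      (fun _ hx => sub_pos.2 (hp.lt_one (Ioo_subset_Ico_self hx)))
      (hsub (concaveOn_effRate_zero_div hp hr hα hk))
  nonpos x hx := by simp [effRate, hp.eq_one x hx, hk]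

lemma exists_effRate_zero_pos {ι : Type*} [Fintype ι] {α k : ι → ℝ} (hp : FailureProb p)
    (hr : RateOfReturn r) (hα : ∀ i, 0 ≤ α i) (hk : ∀ i, 0 ≤ k i) (htbar : 0 < tbar p r α k) :
    ∃ i, ∃ x ∈ Ioc (0 : ℝ) 1, 0 < effRate p r (α i) (k i) x 0 := by
  obtain ⟨t, ht, i, x, hx, htx⟩ := nonempty_iff_ne_empty.2 fun hempty =>
    htbar.ne' ((congrArg sSup hempty).trans Real.sSup_empty)
  have hpos : 0 < effRate p r (α i) (k i) x 0 := htx.trans_le <|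
    effRate_le_effRate_zero (hr.pos x hx).le (hp.mem_unit x) (hα i) (hk i) ht
  -- A return that is positive at `0` stays so slightly to the right, by continuity.
  rcases hx.1.eq_or_lt with rfl | hx0
  · have hcont := ((differentiableOn_effRate_zero (α := α i) (k := k i) hp hr).continuousOn 0
      (left_mem_Ico.2 one_pos)).mono Ioo_subset_Ico_self
    have := left_nhdsWithin_Ioo_neBot (zero_lt_one' ℝ)
    obtain ⟨y, hy, hy01⟩ := ((hcont.eventually_const_lt hpos).and self_mem_nhdsWithin).exists
    exact ⟨i, y, Ioo_subset_Ioc_self hy01, hy⟩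
  · exact ⟨i, x, ⟨hx0, hx.2⟩, hpos⟩

lemma IsPNE.isNash {ι : Type*} [Fintype ι] [DecidableEq ι] {α k x : ι → ℝ} {t : ℝ}
    (hx : IsPNE p r α k t x) : IsNash (fun i u => effRate p r (α i) (k i) u t) α x := by
  refine ⟨hx.1, fun i z hz => ?_⟩
  rw [utility, utility, Function.update_self, Finset.sum_update_of_mem (Finset.mem_univ i),
    Finset.sdiff_singleton_eq_erase, ← Finset.add_sum_erase _ _ (Finset.mem_univ i)]
  exact hx.2 i z hz

end EffectiveRate

/-- at tax rate `t = 0`, the total investment of any social welfare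
maximizing profile is at most the total investment at the pure Nash equilibrium. -/
theorem statement5 {ι : Type*} [Fintype ι] [DecidableEq ι] [Nonempty ι]
    (p r : ℝ → ℝ) (α k : ι → ℝ)
    (hp : FailureProb p) (hr : RateOfReturn r)
    (hα : ∀ i, α i ∈ Ioc (0:ℝ) 1) (hk : ∀ i, 0 < k i)
    (htbar : 0 < tbar p r α k)
    (xOPT : ι → ℝ) (hOPTmem : ∀ i, xOPT i ∈ Icc (0:ℝ) 1)
    (hOPT : ∀ z : ι → ℝ, (∀ i, z i ∈ Icc (0:ℝ) 1) →
      ∑ i, z i ^ α i * effRate p r (α i) (k i) (∑ l, z l) 0 ≤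
        ∑ i, xOPT i ^ α i * effRate p r (α i) (k i) (∑ l, xOPT l) 0)
    (xNE : ι → ℝ) (hNE : IsPNE p r α k 0 xNE) :
    ∑ i, xOPT i ≤ ∑ i, xNE i :=
  statement5_general
    (fun i => fragileReturn_effRate_zero hp hr (Ioc_subset_Icc_self (hα i)) (hk i).le)
    (fun i => (hα i).1)
    (exists_effRate_zero_pos hp hr (fun i => (hα i).1.le) (fun i => (hk i).le) htbar)
    ⟨hOPTmem, hOPT⟩ hNE.isNash
end
end

section
/- Consider a Fragile CPR game with strictly increasing rate of return r, and let x ∈ I^t_i (so f_i(x,t) > 0 and f_{i,x}(x,t) < 0). Then the denominator of q_i(x,t) is positive; specifically, (r(x)+1)p'(x) > (r(x)−t)p'(x) > α_i r'(x)(1−p(x))p(x). -/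
open Real Set

noncomputable section

/-!
Near a point where `r > t`, the effective rate of return is `f = (r - t) ^ α * (1 - p) - K * p`
with a constant `K = k * (1 + t) ^ α`. The term `-K * p` is proportional to `p`, so it drops out of
the Wronskian-type combination
`f * p' - f' * p = (r - t) ^ (α - 1) * ((r - t) * p' - α * r' * (1 - p) * p)`.
If `f > 0 > f'`, then the increasing return `r` cannot be what lowers `f`, so `p' > 0`; the
left-hand side is then positive, and so is the last factor on the right.
-/

section Differentiability

variable {p r : ℝ → ℝ} {x : ℝ}

theorem FailureProb.differentiableAt (hp : FailureProb p) (hx : x ∈ Ioo (0 : ℝ) 1) :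
    DifferentiableAt ℝ p x :=
  (hp.contDiffOn.contDiffAt (Ico_mem_nhds hx.1 hx.2)).differentiableAt one_ne_zero

theorem RateOfReturn.differentiableAt (hr : RateOfReturn r) (hx : x ∈ Ioo (0 : ℝ) 1) :
    DifferentiableAt ℝ r x :=
  (hr.contDiffOn.contDiffAt (Icc_mem_nhds hx.1 hx.2)).differentiableAt one_ne_zero

theorem deriv_nonneg_of_monotoneOn {f : ℝ → ℝ} {s : Set ℝ} (hf : MonotoneOn f s)
    (hs : s ∈ nhds x) : 0 ≤ deriv f x := by
  rw [← derivWithin_of_mem_nhds hs]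
  exact hf.derivWithin_nonneg

end Differentiability

section EffectiveRate

variable {p r : ℝ → ℝ} {α k t x : ℝ}

theorem lt_of_mem_St_of_lt {z : ℝ} (hr : StrictMonoOn r (Icc (0 : ℝ) 1)) (hz : z ∈ St r t)
    (hzx : z < x) (hx : x ≤ 1) : t < r x :=
  (sub_nonneg.1 hz.2).trans_lt (hr hz.1 ⟨hz.1.1.trans hzx.le, hx⟩ hzx)

theorem effRate_of_le (h : t ≤ r x) :
    effRate p r α k x t = (r x - t) ^ α * (1 - p x) - k * (1 + t) ^ α * p x :=
  if_pos (sub_nonneg.2 h)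

theorem hasDerivAt_effRate {p' r' : ℝ} (hp : HasDerivAt p p' x) (hr : HasDerivAt r r' x)
    (h : t < r x) :
    HasDerivAt (fun s => effRate p r α k s t)
      (α * (r x - t) ^ (α - 1) * r' * (1 - p x) - ((r x - t) ^ α + k * (1 + t) ^ α) * p') x := by
  have gain_branch : (fun s => effRate p r α k s t) =ᶠ[nhds x]
      fun s => (r s - t) ^ α * (1 - p s) - k * (1 + t) ^ α * p s := by
    filter_upwards [hr.continuousAt.eventually_const_lt h] with s hs
    exact effRate_of_le hs.le
  have gain_term : HasDerivAt (fun s => (r s - t) ^ α) (r' * α * (r x - t) ^ (α - 1)) x :=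
    (hr.sub_const t).rpow_const (Or.inl (sub_pos.2 h).ne')
  refine (((gain_term.mul (hp.const_sub 1)).sub
    (hp.const_mul (k * (1 + t) ^ α))).congr_of_eventuallyEq gain_branch).congr_deriv ?_
  ring

theorem effRateDx_eq (hp : DifferentiableAt ℝ p x) (hr : DifferentiableAt ℝ r x) (h : t < r x) :
    effRateDx p r α k x t = α * (r x - t) ^ (α - 1) * deriv r x * (1 - p x) -
      ((r x - t) ^ α + k * (1 + t) ^ α) * deriv p x :=
  (hasDerivAt_effRate hp.hasDerivAt hr.hasDerivAt h).deriv

theorem effRate_mul_deriv_sub_effRateDx_mul (hp : DifferentiableAt ℝ p x)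
    (hr : DifferentiableAt ℝ r x) (h : t < r x) :
    effRate p r α k x t * deriv p x - effRateDx p r α k x t * p x =
      (r x - t) ^ (α - 1) *
        ((r x - t) * deriv p x - α * deriv r x * (1 - p x) * p x) := by
  have rpow_eq : (r x - t) ^ α = (r x - t) ^ (α - 1) * (r x - t) := by
    rw [← rpow_add_one (sub_pos.2 h).ne', sub_add_cancel]
  rw [effRate_of_le h.le, effRateDx_eq hp hr h, rpow_eq]
  ring

theorem failureProb_lt_one_of_effRate_pos (hp0 : 0 ≤ p x) (hk : 0 ≤ k) (ht : -1 ≤ t)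
    (h : t < r x) (hf : 0 < effRate p r α k x t) : p x < 1 := by
  have loss_nonneg : 0 ≤ k * (1 + t) ^ α * p x :=
    mul_nonneg (mul_nonneg hk (rpow_nonneg (by linarith) α)) hp0
  rw [effRate_of_le h.le] at hf
  have gain_pos : 0 < (r x - t) ^ α * (1 - p x) := by linarith
  exact sub_pos.1 (pos_of_mul_pos_right gain_pos (rpow_pos_of_pos (sub_pos.2 h) α).le)

theorem deriv_failureProb_pos_of_effRateDx_neg (hp : DifferentiableAt ℝ p x)
    (hr : DifferentiableAt ℝ r x) (hr' : 0 ≤ deriv r x) (hp1 : p x ≤ 1) (hα : 0 ≤ α)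
    (hk : 0 ≤ k) (ht : -1 ≤ t) (h : t < r x) (hfx : effRateDx p r α k x t < 0) :
    0 < deriv p x := by
  have return_effect_nonneg : 0 ≤ α * (r x - t) ^ (α - 1) * deriv r x * (1 - p x) :=
    mul_nonneg (mul_nonneg (mul_nonneg hα (rpow_nonneg (sub_pos.2 h).le _)) hr')
      (sub_nonneg.2 hp1)
  have coeff_nonneg : 0 ≤ (r x - t) ^ α + k * (1 + t) ^ α :=
    add_nonneg (rpow_nonneg (sub_pos.2 h).le α) (mul_nonneg hk (rpow_nonneg (by linarith) α))
  rw [effRateDx_eq hp hr h] at hfx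
  exact pos_of_mul_pos_right (by linarith) coeff_nonneg

end EffectiveRate

theorem statement7_general {p r : ℝ → ℝ} {α k t x : ℝ} (hp : DifferentiableAt ℝ p x)
    (hr : DifferentiableAt ℝ r x) (hr' : 0 ≤ deriv r x) (hp0 : 0 ≤ p x) (hα : 0 ≤ α)
    (hk : 0 ≤ k) (ht : -1 < t) (h : t < r x) (hf : 0 < effRate p r α k x t)
    (hfx : effRateDx p r α k x t < 0) :
    α * deriv r x * (1 - p x) * p x < (r x - t) * deriv p x ∧
      (r x - t) * deriv p x < (r x + 1) * deriv p x := by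
  have hp1 : p x < 1 := failureProb_lt_one_of_effRate_pos hp0 hk ht.le h hf
  have hp' : 0 < deriv p x :=
    deriv_failureProb_pos_of_effRateDx_neg hp hr hr' hp1.le hα hk ht.le h hfx
  have wronskian_pos : 0 < effRate p r α k x t * deriv p x - effRateDx p r α k x t * p x := by
    linarith [mul_pos hf hp', mul_nonpos_of_nonpos_of_nonneg hfx.le hp0]
  rw [effRate_mul_deriv_sub_effRateDx_mul hp hr h] at wronskian_pos
  exact ⟨sub_pos.1 (pos_of_mul_pos_right wronskian_pos (rpow_nonneg (sub_pos.2 h).le _)),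
    mul_lt_mul_of_pos_right (by linarith) hp'⟩

/-- for a strictly increasing rate of return and `x ∈ I^t_i = (z^t_i, y^t_i)`
(so `f_i(x,t) > 0` and `f_{i,x}(x,t) < 0`), the denominator of `q_i(x,t)` is positive;
specifically `(r(x)+1)p'(x) > (r(x)−t)p'(x) > α_i r'(x)(1−p(x))p(x)`. -/
theorem statement7 (p r : ℝ → ℝ) (α k : ℝ)
    (hp : FailureProb p) (hr : RateOfReturn r)
    (hinc : StrictMonoOn r (Icc (0:ℝ) 1))
    (hα : α ∈ Ioc (0:ℝ) 1) (hk : 0 < k)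
    (t : ℝ) (ht : 0 ≤ t) (z y x : ℝ)
    (hz : z ∈ St r t ∧ IsMaxOn (fun s => effRate p r α k s t) (St r t) z)
    (hy : y ∈ Ioo z 1 ∧ effRate p r α k y t = 0)
    (hx : x ∈ Ioo z y)
    (hf : 0 < effRate p r α k x t)
    (hfx : effRateDx p r α k x t < 0) :
    α * deriv r x * (1 - p x) * p x < (r x - t) * deriv p x ∧
      (r x - t) * deriv p x < (r x + 1) * deriv p x := by
  have hx01 : x ∈ Ioo (0 : ℝ) 1 := ⟨hz.1.1.1.trans_lt hx.1, hx.2.trans hy.1.2⟩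
  exact statement7_general (hp.differentiableAt hx01) (hr.differentiableAt hx01)
    (deriv_nonneg_of_monotoneOn hinc.monotoneOn (Icc_mem_nhds hx01.1 hx01.2)) (hp.mem_unit x).1
    hα.1.le hk.le (by linarith) (lt_of_mem_St_of_lt hinc hz.1 hx.1 hx01.2.le) hf hfx
end
end

section
/- Consider a Fragile CPR game with strictly decreasing rate of return r, and players with arbitrary heterogeneous prospect-theoretic preferences α_i ∈ (0,1], k_i > 0. Then for any tax rates 0 ≤ t_2 < t_1 < t̄, the PNE utilizations satisfy x^{t_1}_NE ≤ x^{t_2}_NE; that is, a higher tax rate always yields weakly smaller utilization. -/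
/-!
The heart of the matter is that `-log f(X, t)`, where the effective rate of return `f` is positive,
increases in the utilization `X` with increments that themselves increase in both `X` and `t`
(`steepeningOn_neg_log_effRate`). Write `f = G - L = G * (1 - L / G)` with expected gain
`G = (r - t) ^ α * (1 - p)` and expected loss `L = k * (1 + t) ^ α * p`. Then `-log G` has this
property because `r - t` and `1 - p` are concave and decreasing, and so does

  `L / G = k * (1 + t) ^ α * (r - t) ^ (-α) * (p / (1 - p))`,

hence also `-log (1 - L / G)`, since the property survives sums, products of nonnegative functions
and composition with an increasing convex function.

Suppose now that the utilizations satisfy `X₂ < X₁` although `t₂ ≤ t₁`. Some player invests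
`b₁ > b₂`. Shift a small amount `h` from `b₁` and, in the other equilibrium, add it to `b₂`.
Neither deviation pays, so

  `((b₁ - h) * (b₂ + h)) ^ α * f(X₁ - h, t₁) * f(X₂ + h, t₂)`
    `≤ (b₁ * b₂) ^ α * f(X₁, t₁) * f(X₂, t₂)`.

But `(b₁ - h) * (b₂ + h) > b₁ * b₂`, while the increments of `-log f` give
`f(X₁ - h, t₁) * f(X₂ + h, t₂) ≥ f(X₁, t₁) * f(X₂, t₂)`, a contradiction.
-/

open Real Set

noncomputable section

lemma convexOn_add_le_add_of_mem_Icc {s : Set ℝ} {φ : ℝ → ℝ} (hφ : ConvexOn ℝ s φ) {a b x y : ℝ}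
    (ha : a ∈ s) (hb : b ∈ s) (hx : x ∈ Icc a b) (hxy : x + y = a + b) :
    φ x + φ y ≤ φ a + φ b := by
  rw [← segment_eq_Icc (hx.1.trans hx.2)] at hx
  obtain ⟨u, v, hu, hv, huv, rfl⟩ := hx
  obtain rfl : y = v • a + u • b := by
    simp only [smul_eq_mul] at hxy ⊢
    linear_combination hxy - (a + b) * huv
  have hleft := hφ.2 ha hb hu hv huv
  have hright := hφ.2 ha hb hv hu ((add_comm v u).trans huv)
  simp only [smul_eq_mul] at hleft hright ⊢
  linear_combination hleft + hright + (φ a + φ b) * huv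

/-- `F (x, t)` is nondecreasing, and its increments over an interval of fixed length in `x` are
nondecreasing in the position of the interval and in `t`. For smooth `F` this says that
`F` and `∂F/∂x` are nondecreasing in both variables; stated with differences, the
notion applies to functions with kinks. -/
structure SteepeningOn {T : Type*} [Preorder T] (D : Set (ℝ × T)) (F : ℝ × T → ℝ) : Prop where
  mono : MonotoneOn F D
  increment_le : ∀ ⦃x y h : ℝ⦄ ⦃s t : T⦄, 0 ≤ h → x ≤ y → s ≤ t →
    (x, s) ∈ D → (x + h, s) ∈ D → (y, t) ∈ D → (y + h, t) ∈ D →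
    F (x + h, s) - F (x, s) ≤ F (y + h, t) - F (y, t)

namespace SteepeningOn

variable {T : Type*} [Preorder T] {D D' : Set (ℝ × T)} {F G : ℝ × T → ℝ}

lemma subset (hF : SteepeningOn D F) (hD : D' ⊆ D) : SteepeningOn D' F where
  mono := hF.mono.mono hD
  increment_le _ _ _ _ _ hh hxy hst hx hxh hy hyh :=
    hF.increment_le hh hxy hst (hD hx) (hD hxh) (hD hy) (hD hyh)

lemma congr (hF : SteepeningOn D F) (h : EqOn F G D) : SteepeningOn D G where
  mono := hF.mono.congr h
  increment_le _ _ _ _ _ hh hxy hst hx hxh hy hyh := by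
    rw [← h hx, ← h hxh, ← h hy, ← h hyh]
    exact hF.increment_le hh hxy hst hx hxh hy hyh

lemma fst : SteepeningOn D Prod.fst where
  mono _ _ _ _ h := h.1
  increment_le _ _ _ _ _ _ _ _ _ _ _ _ := by simp only [add_sub_cancel_left, le_refl]

lemma comp_snd {g : T → ℝ} (hg : MonotoneOn g (Prod.snd '' D)) :
    SteepeningOn D (fun z => g z.2) where
  mono _ hz _ hw h := hg (mem_image_of_mem _ hz) (mem_image_of_mem _ hw) h.2
  increment_le _ _ _ _ _ _ _ _ _ _ _ _ := by simp only [sub_self, le_refl]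

lemma add (hF : SteepeningOn D F) (hG : SteepeningOn D G) :
    SteepeningOn D (fun z => F z + G z) where
  mono := hF.mono.add hG.mono
  increment_le _ _ _ _ _ hh hxy hst hx hxh hy hyh := by
    linarith [hF.increment_le hh hxy hst hx hxh hy hyh, hG.increment_le hh hxy hst hx hxh hy hyh]

lemma sub_const (hF : SteepeningOn D F) (c : ℝ) : SteepeningOn D (fun z => F z - c) where
  mono _ hz _ hw h := sub_le_sub_right (hF.mono hz hw h) c
  increment_le _ _ _ _ _ hh hxy hst hx hxh hy hyh := by
    simpa only [sub_sub_sub_cancel_right] using hF.increment_le hh hxy hst hx hxh hy hyh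

lemma const_mul {c : ℝ} (hc : 0 ≤ c) (hF : SteepeningOn D F) :
    SteepeningOn D (fun z => c * F z) where
  mono _ hz _ hw h := mul_le_mul_of_nonneg_left (hF.mono hz hw h) hc
  increment_le _ _ _ _ _ hh hxy hst hx hxh hy hyh := by
    simpa only [mul_sub] using
      mul_le_mul_of_nonneg_left (hF.increment_le hh hxy hst hx hxh hy hyh) hc

lemma mul (hF : SteepeningOn D F) (hG : SteepeningOn D G) (hF₀ : ∀ z ∈ D, 0 ≤ F z)
    (hG₀ : ∀ z ∈ D, 0 ≤ G z) : SteepeningOn D (fun z => F z * G z) where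
  mono z hz w hw h := mul_le_mul (hF.mono hz hw h) (hG.mono hz hw h) (hG₀ z hz) (hF₀ w hw)
  increment_le x y h s t hh hxy hst hx hxh hy hyh := by
    have hG_rise : G (x, s) ≤ G (x + h, s) :=
      hG.mono hx hxh ⟨le_add_of_nonneg_right hh, le_refl s⟩
    have hF_rise : F (y, t) ≤ F (y + h, t) :=
      hF.mono hy hyh ⟨le_add_of_nonneg_right hh, le_refl t⟩
    calc F (x + h, s) * G (x + h, s) - F (x, s) * G (x, s)
        = (F (x + h, s) - F (x, s)) * G (x + h, s) + F (x, s) * (G (x + h, s) - G (x, s)) := by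
          ring
      _ ≤ (F (y + h, t) - F (y, t)) * G (y + h, t) + F (y, t) * (G (y + h, t) - G (y, t)) :=
          add_le_add
            (mul_le_mul (hF.increment_le hh hxy hst hx hxh hy hyh)
              (hG.mono hxh hyh ⟨add_le_add_left hxy h, hst⟩) (hG₀ _ hxh) (sub_nonneg.2 hF_rise))
            (mul_le_mul (hF.mono hx hy ⟨hxy, hst⟩)
              (hG.increment_le hh hxy hst hx hxh hy hyh) (sub_nonneg.2 hG_rise) (hF₀ _ hy))
      _ = F (y + h, t) * G (y + h, t) - F (y, t) * G (y, t) := by ring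

lemma convexOn_comp {I : Set ℝ} {φ : ℝ → ℝ} (hφ : ConvexOn ℝ I φ) (hφ_mono : MonotoneOn φ I)
    (hF : SteepeningOn D F) (hFI : MapsTo F D I) : SteepeningOn D (fun z => φ (F z)) where
  mono := hφ_mono.comp hF.mono hFI
  increment_le x y h s t hh hxy hst hx hxh hy hyh := by
    have hF_rise : F (x, s) ≤ F (x + h, s) :=
      hF.mono hx hxh ⟨le_add_of_nonneg_right hh, le_refl s⟩
    have hF_le : F (x, s) ≤ F (y, t) := hF.mono hx hy ⟨hxy, hst⟩
    have hF_incr := hF.increment_le hh hxy hst hx hxh hy hyh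
    obtain ⟨c, hc⟩ : ∃ c, c = F (y, t) + (F (x + h, s) - F (x, s)) := ⟨_, rfl⟩
    have hcI : c ∈ I := hφ.1.ordConnected.out (hFI hy) (hFI hyh) ⟨by linarith, by linarith⟩
    have hφ_incr : φ (F (x + h, s)) + φ (F (y, t)) ≤ φ (F (x, s)) + φ c :=
      convexOn_add_le_add_of_mem_Icc hφ (hFI hx) hcI ⟨hF_rise, by linarith⟩ (by linarith)
    have hφ_le : φ c ≤ φ (F (y + h, t)) := hφ_mono hcI (hFI hyh) (by linarith)
    linarith

lemma exp (hF : SteepeningOn D F) : SteepeningOn D (fun z => Real.exp (F z)) :=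
  convexOn_comp convexOn_exp (exp_monotone.monotoneOn univ) hF (mapsTo_univ F D)

lemma neg_log (hF : SteepeningOn D (fun z => -F z)) (hF₀ : ∀ z ∈ D, 0 < F z) :
    SteepeningOn D (fun z => -log (F z)) := by
  -- `Real.log` is even, so `-log` is also convex and increasing on the negative half-line.
  simpa only [log_neg_eq_log] using
    convexOn_comp (φ := fun u => -log u) strictConcaveOn_log_Iio.concaveOn.neg
      strictAntiOn_log.antitoneOn.neg hF fun z hz => neg_lt_zero.2 (hF₀ z hz)

lemma mul_le_mul_of_neg_log (hF : SteepeningOn D (fun z => -log (F z)))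
    (hF₀ : ∀ z ∈ D, 0 < F z) {x x' y y' : ℝ} {s t : T} (hx' : x ≤ x') (hxy : x ≤ y) (hst : s ≤ t)
    (h_sum : x + y' = x' + y) (hx : (x, s) ∈ D) (hxD : (x', s) ∈ D) (hy : (y, t) ∈ D)
    (hyD : (y', t) ∈ D) : F (x, s) * F (y', t) ≤ F (x', s) * F (y, t) := by
  obtain ⟨h, rfl⟩ : ∃ h, x' = x + h := ⟨x' - x, by ring⟩
  obtain rfl : y' = y + h := by linarith
  have h_incr := hF.increment_le (by linarith) hxy hst hx hxD hy hyD
  rw [← log_le_log_iff (mul_pos (hF₀ _ hx) (hF₀ _ hyD)) (mul_pos (hF₀ _ hxD) (hF₀ _ hy)),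
    log_mul (hF₀ _ hx).ne' (hF₀ _ hyD).ne', log_mul (hF₀ _ hxD).ne' (hF₀ _ hy).ne']
  linarith

end SteepeningOn

/-- Failure probabilities that are strictly increasing and convex below full utilization, where they
may have kinks, and equal to one from there on. -/
structure ConvexFailureProb (p : ℝ → ℝ) : Prop where
  convexOn : ConvexOn ℝ (Ico 0 1) p
  strictMonoOn : StrictMonoOn p (Ico 0 1)
  mapsTo : MapsTo p (Ico 0 1) (Icc 0 1)
  eq_one : ∀ x : ℝ, 1 ≤ x → p x = 1

/-- Rates of return that are concave and nonincreasing below full utilization, constant rates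
included. -/
structure ConcaveReturn (r : ℝ → ℝ) : Prop where
  concaveOn : ConcaveOn ℝ (Ico 0 1) r
  antitoneOn : AntitoneOn r (Ico 0 1)

/-- The pairs `(X, t)` of a utilization below the failure threshold and a nonnegative tax rate
strictly below the rate of return. -/
def gainRegion (r : ℝ → ℝ) : Set (ℝ × ℝ) := {z | z.1 ∈ Ico 0 1 ∧ 0 ≤ z.2 ∧ z.2 < r z.1}

/-- The first term of the effective rate of return at `z = (X, t)`: the prospect value of the net
return `r X - t`, weighted by the probability that the resource survives. -/
def expectedGain (p r : ℝ → ℝ) (α : ℝ) (z : ℝ × ℝ) : ℝ := (r z.1 - z.2) ^ α * (1 - p z.1)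

/-- The second term of the effective rate of return at `z = (X, t)`: the prospect value of losing
the investment and the tax, weighted by the failure probability. -/
def expectedLoss (p : ℝ → ℝ) (α k : ℝ) (z : ℝ × ℝ) : ℝ := k * (1 + z.2) ^ α * p z.1

/-- The part of `gainRegion` where the effective rate of return is positive. -/
def profitRegion (p r : ℝ → ℝ) (α k : ℝ) : Set (ℝ × ℝ) :=
  {z ∈ gainRegion r | 0 < effRate p r α k z.1 z.2}

section Game

variable {p r : ℝ → ℝ} {α k : ℝ}

lemma FailureProb.convexFailureProb (hp : FailureProb p) : ConvexFailureProb p where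
  convexOn := hp.convexOn
  strictMonoOn := hp.strictMonoOn
  mapsTo x _ := hp.mem_unit x
  eq_one := hp.eq_one

lemma RateOfReturn.concaveReturn (hr : RateOfReturn r) (hdec : StrictAntiOn r (Icc 0 1)) :
    ConcaveReturn r where
  concaveOn := hr.concaveOn.subset Ico_subset_Icc_self (convex_Ico 0 1)
  antitoneOn := hdec.antitoneOn.mono Ico_subset_Icc_self

lemma ConvexFailureProb.lt_one (hp : ConvexFailureProb p) {X : ℝ} (hX : X ∈ Ico (0 : ℝ) 1) :
    p X < 1 := by
  obtain ⟨Y, hXY, hY⟩ := exists_between hX.2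
  have hYmem : Y ∈ Ico (0 : ℝ) 1 := ⟨hX.1.trans hXY.le, hY⟩
  exact (hp.strictMonoOn hX hYmem hXY).trans_le (hp.mapsTo hYmem).2

lemma ConvexFailureProb.pos (hp : ConvexFailureProb p) {X : ℝ} (hX : X ∈ Ioo (0 : ℝ) 1) :
    0 < p X :=
  have h0 : (0 : ℝ) ∈ Ico (0 : ℝ) 1 := ⟨le_rfl, zero_lt_one⟩
  (hp.mapsTo h0).1.trans_lt (hp.strictMonoOn h0 (Ioo_subset_Ico_self hX) hX.1)

lemma ConcaveReturn.mem_gainRegion_of_le (hr : ConcaveReturn r) {z w : ℝ × ℝ}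
    (hw : w ∈ gainRegion r) (hzw : z ≤ w) (hz₁ : 0 ≤ z.1) (hz₂ : 0 ≤ z.2) : z ∈ gainRegion r :=
  have hz : z.1 ∈ Ico (0 : ℝ) 1 := ⟨hz₁, hzw.1.trans_lt hw.1.2⟩
  ⟨hz, hz₂, hzw.2.trans_lt (hw.2.2.trans_le (hr.antitoneOn hz hw.1 hzw.1))⟩

lemma effRate_eq_gain_sub_loss {z : ℝ × ℝ} (hz : z ∈ gainRegion r) :
    effRate p r α k z.1 z.2 = expectedGain p r α z - expectedLoss p α k z :=
  if_pos (sub_nonneg.2 hz.2.2.le)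

lemma mem_gainRegion_of_effRate_nonneg (hp : ConvexFailureProb p) (hα : 0 < α) (hk : 0 < k)
    {X t : ℝ} (hX : 0 < X) (ht : 0 ≤ t) (h : 0 ≤ effRate p r α k X t) :
    (X, t) ∈ gainRegion r := by
  have hscale : 0 < k * (1 + t) ^ α := by positivity
  have hX1 : X < 1 := by
    by_contra! hX1
    have hfail : effRate p r α k X t = -(k * (1 + t) ^ α) := by
      simp only [effRate, hp.eq_one X hX1, sub_self, mul_zero, mul_one, zero_sub, zero_add,
        ite_self]
    linarith
  have hloss : 0 < k * (1 + t) ^ α * p X := mul_pos hscale (hp.pos ⟨hX, hX1⟩)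
  refine ⟨⟨hX.le, hX1⟩, ht, ?_⟩
  by_contra! hrt
  rcases hrt.eq_or_lt with hrt | hrt
  · rw [effRate, hrt, sub_self, if_pos le_rfl, zero_rpow hα.ne'] at h
    linarith
  · rw [effRate, if_neg (by linarith)] at h
    have hshortfall : 0 ≤ k * ((t - r X) ^ α * (1 - p X)) :=
      mul_nonneg hk.le (mul_nonneg (rpow_nonneg (sub_nonneg.2 hrt.le) α)
        (sub_nonneg.2 (hp.lt_one ⟨hX.le, hX1⟩).le))
    linarith

lemma expectedGain_pos (hp : ConvexFailureProb p) {z : ℝ × ℝ} (hz : z ∈ gainRegion r) :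
    0 < expectedGain p r α z :=
  mul_pos (rpow_pos_of_pos (sub_pos.2 hz.2.2) α) (sub_pos.2 (hp.lt_one hz.1))

lemma expectedGain_antitoneOn (hp : ConvexFailureProb p) (hr : ConcaveReturn r) (hα : 0 ≤ α) :
    AntitoneOn (expectedGain p r α) (gainRegion r) := fun _ hz _ hw hzw =>
  mul_le_mul
    (rpow_le_rpow (sub_nonneg.2 hw.2.2.le)
      (sub_le_sub (hr.antitoneOn hz.1 hw.1 hzw.1) hzw.2) hα)
    (sub_le_sub_left (hp.strictMonoOn.monotoneOn hz.1 hw.1 hzw.1) 1)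
    (sub_nonneg.2 (hp.lt_one hw.1).le) (rpow_nonneg (sub_nonneg.2 hz.2.2.le) α)

lemma expectedLoss_lt (hp : ConvexFailureProb p) (hα : 0 ≤ α) (hk : 0 < k) {z w : ℝ × ℝ}
    (hz : z ∈ gainRegion r) (hw : w ∈ gainRegion r) (h₁ : z.1 < w.1) (h₂ : z.2 ≤ w.2) :
    expectedLoss p α k z < expectedLoss p α k w := by
  have hz₂ : 0 < 1 + z.2 := add_pos_of_pos_of_nonneg one_pos hz.2.1
  exact mul_lt_mul'
    (mul_le_mul_of_nonneg_left (rpow_le_rpow hz₂.le (add_le_add_right h₂ 1) hα) hk.le)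
    (hp.strictMonoOn hz.1 hw.1 h₁) (hp.mapsTo hz.1).1
    (mul_pos hk (rpow_pos_of_pos (hz₂.trans_le (add_le_add_right h₂ 1)) α))

lemma effRate_lt_effRate (hp : ConvexFailureProb p) (hr : ConcaveReturn r) (hα : 0 ≤ α)
    (hk : 0 < k) {z w : ℝ × ℝ} (hz : z ∈ gainRegion r) (hw : w ∈ gainRegion r)
    (h₁ : z.1 < w.1) (h₂ : z.2 ≤ w.2) :
    effRate p r α k w.1 w.2 < effRate p r α k z.1 z.2 := by
  rw [effRate_eq_gain_sub_loss hz, effRate_eq_gain_sub_loss hw]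
  exact (sub_le_sub_right (expectedGain_antitoneOn hp hr hα hz hw ⟨h₁.le, h₂⟩) _).trans_lt
    (sub_lt_sub_left (expectedLoss_lt hp hα hk hz hw h₁ h₂) _)

lemma mem_profitRegion_of_lt (hp : ConvexFailureProb p) (hr : ConcaveReturn r) (hα : 0 < α)
    (hk : 0 < k) {X Y s t : ℝ} (hX : 0 ≤ X) (hXY : X < Y) (hs : 0 ≤ s) (hst : s ≤ t)
    (h : 0 ≤ effRate p r α k Y t) : (X, s) ∈ profitRegion p r α k := by
  have hY := mem_gainRegion_of_effRate_nonneg hp hα hk (hX.trans_lt hXY) (hs.trans hst) h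
  have hXs := hr.mem_gainRegion_of_le (z := (X, s)) hY ⟨hXY.le, hst⟩ hX hs
  exact ⟨hXs, h.trans_lt (effRate_lt_effRate hp hr hα.le hk hXs hY hXY hst)⟩

lemma steepeningOn_neg_netReturn (hr : ConcaveReturn r) :
    SteepeningOn (gainRegion r) (fun z => -(r z.1 - z.2)) := by
  have h_return : SteepeningOn (gainRegion r) (fun z => -r z.1) :=
    SteepeningOn.convexOn_comp (φ := fun X => -r X) hr.concaveOn.neg hr.antitoneOn.neg .fst
      fun _ hz => hz.1
  refine (h_return.add (.comp_snd (g := id) monotoneOn_id)).congr fun z _ => ?_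
  simp only [id, neg_sub]
  ring

lemma steepeningOn_neg_survival (hp : ConvexFailureProb p) :
    SteepeningOn (gainRegion r) (fun z => -(1 - p z.1)) := by
  simp only [neg_sub]
  exact (SteepeningOn.convexOn_comp hp.convexOn hp.strictMonoOn.monotoneOn .fst
    fun _ hz => hz.1).sub_const 1

lemma steepeningOn_neg_log_netReturn (hr : ConcaveReturn r) :
    SteepeningOn (gainRegion r) (fun z => -log (r z.1 - z.2)) :=
  (steepeningOn_neg_netReturn hr).neg_log fun _ hz => sub_pos.2 hz.2.2

lemma steepeningOn_neg_log_survival (hp : ConvexFailureProb p) :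
    SteepeningOn (gainRegion r) (fun z => -log (1 - p z.1)) :=
  (steepeningOn_neg_survival hp).neg_log fun _ hz => sub_pos.2 (hp.lt_one hz.1)

lemma steepeningOn_neg_log_expectedGain (hp : ConvexFailureProb p) (hr : ConcaveReturn r)
    (hα : 0 ≤ α) : SteepeningOn (gainRegion r) (fun z => -log (expectedGain p r α z)) := by
  refine (((steepeningOn_neg_log_netReturn hr).const_mul hα).add
    (steepeningOn_neg_log_survival hp)).congr fun z hz => ?_
  have hR : 0 < r z.1 - z.2 := sub_pos.2 hz.2.2
  simp only [expectedGain]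
  rw [log_mul (rpow_pos_of_pos hR α).ne' (sub_pos.2 (hp.lt_one hz.1)).ne', log_rpow hR]
  ring

lemma steepeningOn_failureOdds (hp : ConvexFailureProb p) :
    SteepeningOn (gainRegion r) (fun z => p z.1 / (1 - p z.1)) := by
  refine ((steepeningOn_neg_log_survival hp).exp.sub_const 1).congr fun z hz => ?_
  have hq : 0 < 1 - p z.1 := sub_pos.2 (hp.lt_one hz.1)
  simp only [exp_neg, exp_log hq]
  field_simp
  ring

lemma steepeningOn_rpow_neg_netReturn (hr : ConcaveReturn r) (hα : 0 ≤ α) :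
    SteepeningOn (gainRegion r) (fun z => (r z.1 - z.2) ^ (-α)) := by
  refine ((steepeningOn_neg_log_netReturn hr).const_mul hα).exp.congr fun z hz => ?_
  simp only [rpow_def_of_pos (sub_pos.2 hz.2.2)]
  ring_nf

lemma steepeningOn_lossGainRatio (hp : ConvexFailureProb p) (hr : ConcaveReturn r) (hα : 0 ≤ α)
    (hk : 0 ≤ k) :
    SteepeningOn (gainRegion r) (fun z => expectedLoss p α k z / expectedGain p r α z) := by
  have h_scale : SteepeningOn (gainRegion r) (fun z => k * (1 + z.2) ^ α) := by
    refine (SteepeningOn.comp_snd (g := fun t => (1 + t) ^ α) ?_).const_mul hk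
    rintro s ⟨z, hz, rfl⟩ t - hst
    exact rpow_le_rpow (add_nonneg zero_le_one hz.2.1) (add_le_add_right hst 1) hα
  have h_scale₀ : ∀ z ∈ gainRegion r, 0 ≤ k * (1 + z.2) ^ α := fun z hz =>
    mul_nonneg hk (rpow_nonneg (add_nonneg zero_le_one hz.2.1) α)
  have h_return₀ : ∀ z ∈ gainRegion r, 0 ≤ (r z.1 - z.2) ^ (-α) := fun z hz =>
    rpow_nonneg (sub_nonneg.2 hz.2.2.le) (-α)
  have h_odds₀ : ∀ z ∈ gainRegion r, 0 ≤ p z.1 / (1 - p z.1) := fun z hz =>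
    div_nonneg (hp.mapsTo hz.1).1 (sub_nonneg.2 (hp.lt_one hz.1).le)
  refine ((h_scale.mul (steepeningOn_rpow_neg_netReturn hr hα) h_scale₀ h_return₀).mul
    (steepeningOn_failureOdds hp)
    (fun z hz => mul_nonneg (h_scale₀ z hz) (h_return₀ z hz)) h_odds₀).congr fun z hz => ?_
  simp only [expectedLoss, expectedGain, rpow_neg (sub_nonneg.2 hz.2.2.le), div_eq_mul_inv, mul_inv]
  ring

lemma lossGainRatio_lt_one (hp : ConvexFailureProb p) {z : ℝ × ℝ}
    (hz : z ∈ profitRegion p r α k) : expectedLoss p α k z / expectedGain p r α z < 1 :=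
  (div_lt_one (expectedGain_pos hp hz.1)).2 <|
    sub_pos.1 (effRate_eq_gain_sub_loss (p := p) hz.1 ▸ hz.2)

theorem steepeningOn_neg_log_effRate (hp : ConvexFailureProb p) (hr : ConcaveReturn r)
    (hα : 0 ≤ α) (hk : 0 ≤ k) :
    SteepeningOn (profitRegion p r α k) (fun z => -log (effRate p r α k z.1 z.2)) := by
  have h_sub : profitRegion p r α k ⊆ gainRegion r := sep_subset _ _
  have h_margin : SteepeningOn (profitRegion p r α k)
      (fun z => -(1 - expectedLoss p α k z / expectedGain p r α z)) := by
    simpa only [neg_sub] using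
      ((steepeningOn_lossGainRatio hp hr hα hk).subset h_sub).sub_const 1
  have h_margin₀ : ∀ z ∈ profitRegion p r α k,
      0 < 1 - expectedLoss p α k z / expectedGain p r α z :=
    fun z hz => sub_pos.2 (lossGainRatio_lt_one hp hz)
  refine (((steepeningOn_neg_log_expectedGain hp hr hα).subset h_sub).add
    (h_margin.neg_log h_margin₀)).congr fun z hz => ?_
  have hG : 0 < expectedGain p r α z := expectedGain_pos hp hz.1
  have h_factor : effRate p r α k z.1 z.2 =
      expectedGain p r α z * (1 - expectedLoss p α k z / expectedGain p r α z) := by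
    rw [effRate_eq_gain_sub_loss hz.1]
    field_simp
  simp only [h_factor, log_mul hG.ne' (h_margin₀ z hz).ne', neg_add]

lemma IsBestResponse.effRate_nonneg {t s b : ℝ} (h : IsBestResponse p r α k t s b) (hα : α ≠ 0)
    (hb : 0 < b) : 0 ≤ effRate p r α k (b + s) t := by
  have h_zero := h.2 0 ⟨le_rfl, zero_le_one⟩
  rw [zero_rpow hα, zero_mul] at h_zero
  exact nonneg_of_mul_nonneg_right h_zero (rpow_pos_of_pos hb α)

lemma IsBestResponse.mem_profitRegion {t s b : ℝ} (h : IsBestResponse p r α k t s b)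
    (hp : ConvexFailureProb p) (hr : ConcaveReturn r) (hα : 0 < α) (hk : 0 < k) (ht : 0 ≤ t)
    (hs : 0 ≤ s) (hb : 0 < b) : (b + s, t) ∈ profitRegion p r α k := by
  have h_nonneg := h.effRate_nonneg hα.ne' hb
  refine ⟨mem_gainRegion_of_effRate_nonneg hp hα hk (by linarith) ht h_nonneg, ?_⟩
  have h_half : 0 < effRate p r α k (b / 2 + s) t :=
    (mem_profitRegion_of_lt hp hr hα hk (by linarith) (by linarith) ht le_rfl h_nonneg).2
  have h_payoff : 0 < (b / 2) ^ α * effRate p r α k (b / 2 + s) t :=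
    mul_pos (rpow_pos_of_pos (half_pos hb) α) h_half
  exact pos_of_mul_pos_right
    (h_payoff.trans_le (h.2 (b / 2) ⟨by linarith, by linarith [h.1.2]⟩))
    (rpow_nonneg hb.le α)

lemma IsBestResponse.mul_le_mul_of_effRate_mul_le {t₁ t₂ s₁ s₂ b₁ b₂ y₁ y₂ : ℝ}
    (h₁ : IsBestResponse p r α k t₁ s₁ b₁) (h₂ : IsBestResponse p r α k t₂ s₂ b₂) (hα : 0 < α)
    (hy₁ : y₁ ∈ Icc (0 : ℝ) 1) (hy₂ : y₂ ∈ Icc (0 : ℝ) 1)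
    (hf₁ : 0 < effRate p r α k (y₁ + s₁) t₁) (hf₂ : 0 < effRate p r α k (y₂ + s₂) t₂)
    (hf : effRate p r α k (b₁ + s₁) t₁ * effRate p r α k (b₂ + s₂) t₂ ≤
      effRate p r α k (y₁ + s₁) t₁ * effRate p r α k (y₂ + s₂) t₂) :
    y₁ * y₂ ≤ b₁ * b₂ := by
  have hb : 0 ≤ b₁ * b₂ := mul_nonneg h₁.1.1 h₂.1.1
  have h_payoff₁ := mul_nonneg (rpow_nonneg hy₁.1 α) hf₁.le
  have h_payoff₂ := mul_nonneg (rpow_nonneg hy₂.1 α) hf₂.le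
  refine (rpow_le_rpow_iff (mul_nonneg hy₁.1 hy₂.1) hb hα).1 <|
    le_of_mul_le_mul_right ?_ (mul_pos hf₁ hf₂)
  calc (y₁ * y₂) ^ α * (effRate p r α k (y₁ + s₁) t₁ * effRate p r α k (y₂ + s₂) t₂)
      = y₁ ^ α * effRate p r α k (y₁ + s₁) t₁ * (y₂ ^ α * effRate p r α k (y₂ + s₂) t₂) := by
        rw [mul_rpow hy₁.1 hy₂.1, mul_mul_mul_comm]
    _ ≤ b₁ ^ α * effRate p r α k (b₁ + s₁) t₁ * (b₂ ^ α * effRate p r α k (b₂ + s₂) t₂) :=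
        mul_le_mul (h₁.2 y₁ hy₁) (h₂.2 y₂ hy₂) h_payoff₂ (h_payoff₁.trans (h₁.2 y₁ hy₁))
    _ = (b₁ * b₂) ^ α * (effRate p r α k (b₁ + s₁) t₁ * effRate p r α k (b₂ + s₂) t₂) := by
        rw [mul_rpow h₁.1.1 h₂.1.1, mul_mul_mul_comm]
    _ ≤ (b₁ * b₂) ^ α * (effRate p r α k (y₁ + s₁) t₁ * effRate p r α k (y₂ + s₂) t₂) :=
        mul_le_mul_of_nonneg_left hf (rpow_nonneg hb α)

theorem IsBestResponse.le_of_add_lt_add {t₁ t₂ s₁ s₂ b₁ b₂ : ℝ}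
    (h₁ : IsBestResponse p r α k t₁ s₁ b₁) (h₂ : IsBestResponse p r α k t₂ s₂ b₂)
    (hp : ConvexFailureProb p) (hr : ConcaveReturn r) (hα : 0 < α) (hk : 0 < k)
    (ht₂ : 0 ≤ t₂) (ht : t₂ ≤ t₁) (hs₁ : 0 ≤ s₁) (hs₂ : 0 ≤ s₂) (hX : b₂ + s₂ < b₁ + s₁) :
    b₁ ≤ b₂ := by
  by_contra! hb
  have hb₂ : 0 ≤ b₂ := h₂.1.1
  obtain ⟨h, hh, hh_lt⟩ := exists_between (lt_min (sub_pos.2 hb) (sub_pos.2 hX))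
  obtain ⟨hhb, hhX⟩ := lt_min_iff.1 hh_lt
  have hX₁ := h₁.mem_profitRegion hp hr hα hk (ht₂.trans ht) hs₁ (hb₂.trans_lt hb)
  have below : ∀ {X t : ℝ}, 0 ≤ X → X < b₁ + s₁ → 0 ≤ t → t ≤ t₁ →
      (X, t) ∈ profitRegion p r α k := fun hX₀ hXlt ht₀ htle =>
    mem_profitRegion_of_lt hp hr hα hk hX₀ hXlt ht₀ htle hX₁.2.le
  have hX₁_down : (b₁ - h + s₁, t₁) ∈ profitRegion p r α k :=
    below (by linarith) (by linarith) (ht₂.trans ht) le_rfl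
  have hX₂ : (b₂ + s₂, t₂) ∈ profitRegion p r α k := below (by linarith) hX ht₂ ht
  have hX₂_up : (b₂ + h + s₂, t₂) ∈ profitRegion p r α k :=
    below (by linarith) (by linarith) ht₂ ht
  have h_rates : effRate p r α k (b₂ + s₂) t₂ * effRate p r α k (b₁ + s₁) t₁ ≤
      effRate p r α k (b₂ + h + s₂) t₂ * effRate p r α k (b₁ - h + s₁) t₁ :=
    steepeningOn_neg_log_effRate hp hr hα.le hk.le |>.mul_le_mul_of_neg_log (fun _ hz => hz.2)
      (by linarith) (by linarith) ht (by ring) hX₂ hX₂_up hX₁_down hX₁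
  have h_investments : (b₂ + h) * (b₁ - h) ≤ b₂ * b₁ :=
    h₂.mul_le_mul_of_effRate_mul_le h₁ hα ⟨by linarith, by linarith [h₁.1.2]⟩
      ⟨by linarith, by linarith [h₁.1.2]⟩ hX₂_up.2 hX₁_down.2 h_rates
  linarith [mul_pos hh (sub_pos.2 hhb)]

lemma IsPNE.isBestResponse {ι : Type*} [Fintype ι] [DecidableEq ι] {α k : ι → ℝ} {t : ℝ}
    {x : ι → ℝ} (hx : IsPNE p r α k t x) (i : ι) :
    IsBestResponse p r (α i) (k i) t (∑ j ∈ Finset.univ.erase i, x j) (x i) :=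
  ⟨hx.1 i, hx.2 i⟩

theorem statement12_general {ι : Type*} [Fintype ι] [DecidableEq ι] {α k : ι → ℝ}
    (hp : ConvexFailureProb p) (hr : ConcaveReturn r) (hα : ∀ i, 0 < α i) (hk : ∀ i, 0 < k i)
    {t₁ t₂ : ℝ} (ht₂ : 0 ≤ t₂) (ht : t₂ ≤ t₁) {x₁ x₂ : ι → ℝ}
    (hx₁ : IsPNE p r α k t₁ x₁) (hx₂ : IsPNE p r α k t₂ x₂) : ∑ i, x₁ i ≤ ∑ i, x₂ i := by
  by_contra! hX
  have others_nonneg {t : ℝ} {x : ι → ℝ} (hx : IsPNE p r α k t x) (i : ι) :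
      0 ≤ ∑ j ∈ Finset.univ.erase i, x j := Finset.sum_nonneg fun j _ => (hx.1 j).1
  have total_eq (x : ι → ℝ) (i : ι) : x i + ∑ j ∈ Finset.univ.erase i, x j = ∑ j, x j :=
    Finset.add_sum_erase _ x (Finset.mem_univ i)
  have h_le (i : ι) : x₁ i ≤ x₂ i :=
    (hx₁.isBestResponse i).le_of_add_lt_add (hx₂.isBestResponse i) hp hr (hα i) (hk i) ht₂ ht
      (others_nonneg hx₁ i) (others_nonneg hx₂ i) (by rwa [total_eq, total_eq])
  exact hX.not_ge (Finset.sum_le_sum fun i _ => h_le i)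

end Game

/-- for a strictly decreasing rate of return and arbitrary
heterogeneous prospect-theoretic preferences, the PNE utilization is
non-increasing in the tax rate: `0 ≤ t_2 < t_1 < t̄` implies
`x^{t_1}_NE ≤ x^{t_2}_NE`. -/
theorem statement12 {ι : Type*} [Fintype ι] [DecidableEq ι] [Nonempty ι]
    (p r : ℝ → ℝ) (α k : ι → ℝ)
    (hp : FailureProb p) (hr : RateOfReturn r)
    (hdec : StrictAntiOn r (Icc (0:ℝ) 1))
    (hα : ∀ i, α i ∈ Ioc (0:ℝ) 1) (hk : ∀ i, 0 < k i)
    (t1 t2 : ℝ) (ht2 : 0 ≤ t2) (h21 : t2 < t1) (h1 : t1 < tbar p r α k)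
    (x1 x2 : ι → ℝ)
    (hx1 : IsPNE p r α k t1 x1) (hx2 : IsPNE p r α k t2 x2) :
    ∑ i, x1 i ≤ ∑ i, x2 i :=
  statement12_general hp.convexFailureProb (hr.concaveReturn hdec) (fun i => (hα i).1) hk ht2
    h21.le hx1 hx2
end
end
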